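/- There exist a constant c > 0 and a natural number n₀ such that for every n ≥ n₀, every real normed vector space X of finite dimension n contains an equilateral set S with card S ≥ c · (log n)^(1/3). -/

import Mathlib

open Module

/-!
By the Dvoretzky–Rogers argument there is a contraction `L` from `m`-dimensional Euclidean space,
`m = ⌊n / 2⌋`, to `X` which maps each basis vector to a vector of norm at least `1 / 4`. Let `g` be
a standard Gaussian vector. The mean `M` of `‖L g‖` is at least of the order of `√(log m)`, while
the fluctuations of `‖L g‖` about `M` are Gaussian with variance of order one, by the rotation
argument of Maurey and Pisier. A union bound then shows that, for `k` independent copies `gᵢ` of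
`g`, the vectors `vᵢ = L gᵢ` satisfy `‖∑ aᵢ vᵢ‖ ≈ M |a|` up to a relative error of order `1 / k`,
simultaneously for all `6 ^ k` coefficient vectors `a` with entries in a set of six numbers; this
needs `M² / k²` to be of order `k`, whence the cube root.

It remains to perturb `v` into an equilateral family. Adding to each `vᵢ` a combination of the
preceding vectors with coefficients `θ (l, i)` of size at most `δ`, of order `1 / k`, one can adjust
each distance separately: on the face `θ (i, j) = δ` of the cube of parameters the `i`-th and `j`-th
vectors are at distance at most `M √2`, on the opposite face at distance at least `M √2`. By the
Poincaré–Miranda theorem all distances equal `M √2` for some value of the parameters.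

That theorem follows from Brouwer's. If `x ↦ x + g x` had no zero for some compactly supported `C¹`
map `g`, choose a continuous `φ ≥ 0` that vanishes at all `‖x + g x‖ ^ 2` but not at `0`. By the
change of variables formula `∫ φ (‖x + t g x‖ ^ 2) det (1 + t g' x)` does not depend on `t` for
small `t`; for a polynomial `φ`, hence by approximation for every `φ`, the values at `t = 0` and
`t = 1` then coincide, but here the first is positive and the second vanishes.
-/

section GaussianConcentration

open MeasureTheory ProbabilityTheory ContinuousLinearMap

lemma integrable_exp_of_le_add_mul_norm {F : Type*} [NormedAddCommGroup F] [NormedSpace ℝ F]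
    [CompleteSpace F] [SecondCountableTopology F] [MeasurableSpace F] [BorelSpace F]
    (μ : Measure F) [IsGaussian μ] {f : F → ℝ} (hf : Continuous f) {a b : ℝ}
    (hab : ∀ x, f x ≤ a + b * ‖x‖) : Integrable (fun x ↦ Real.exp (f x)) μ := by
  obtain ⟨C, hC, h_int⟩ := IsGaussian.exists_integrable_exp_sq μ
  refine (h_int.const_mul (Real.exp (a + b ^ 2 / (4 * C)))).mono'
    (by fun_prop) (ae_of_all _ fun x ↦ ?_)
  have complete_square : 0 ≤ C * ‖x‖ ^ 2 - b * ‖x‖ + b ^ 2 / (4 * C) := by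
    have : C * ‖x‖ ^ 2 - b * ‖x‖ + b ^ 2 / (4 * C) = (2 * C * ‖x‖ - b) ^ 2 / (4 * C) := by
      field_simp
      ring
    rw [this]
    positivity
  rw [Real.norm_of_nonneg (Real.exp_pos _).le, ← Real.exp_add]
  gcongr
  linarith [hab x]

lemma integrable_exp_mul_sub_of_lipschitzWith {E F : Type*} [NormedAddCommGroup F]
    [NormedSpace ℝ F] [CompleteSpace F] [SecondCountableTopology F] [MeasurableSpace F]
    [BorelSpace F] [NormedAddCommGroup E] [NormedSpace ℝ E] (μ : Measure F) [IsGaussian μ]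
    {f : E → ℝ} {K : NNReal} (hf : LipschitzWith K f) (A B : F →L[ℝ] E) (l : ℝ) :
    Integrable (fun z ↦ Real.exp (l * (f (A z) - f (B z)))) μ := by
  have hfc := hf.continuous
  refine integrable_exp_of_le_add_mul_norm μ (a := 0) (b := |l| * (K * ‖A - B‖)) (by fun_prop)
    fun z ↦ ?_
  calc l * (f (A z) - f (B z)) ≤ |l| * |f (A z) - f (B z)| := by
        rw [← abs_mul]
        exact le_abs_self _
    _ ≤ |l| * (K * ‖(A - B) z‖) := by
        gcongr
        simpa [Real.dist_eq, dist_eq_norm] using hf.dist_le_mul (A z) (B z)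
    _ ≤ |l| * (K * (‖A - B‖ * ‖z‖)) := by
        gcongr
        exact (A - B).le_opNorm z
    _ = 0 + |l| * (K * ‖A - B‖) * ‖z‖ := by ring

section Rotation

variable {E : Type*} [NormedAddCommGroup E] [NormedSpace ℝ E]

lemma exp_mul_sub_le_average_rotation (f : E → ℝ) (l : ℝ) {N : ℕ} (hN : N ≠ 0) (z : E × E) :
    Real.exp (l * (f z.1 - f z.2)) ≤ ∑ i ∈ Finset.range N, (1 / N : ℝ) *
      Real.exp (l * N * (f (rotation (i * (Real.pi / (2 * N))) z).1 -
        f (rotation (Real.pi / (2 * N)) (rotation (i * (Real.pi / (2 * N))) z)).1)) := by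
  set h := Real.pi / (2 * N) with h_def
  have rotation_succ (i : ℕ) :
      (rotation h (rotation (i * h) z)).1 = (rotation ((i + 1 : ℕ) * h) z).1 := by
    simp only [ContinuousLinearMap.rotation_apply]
    push_cast
    rw [add_mul, one_mul, Real.cos_add, Real.sin_add]
    module
  have telescope : l * (f z.1 - f z.2) = ∑ i ∈ Finset.range N, (1 / N : ℝ) •
      (l * N * (f (rotation (i * h) z).1 - f (rotation h (rotation (i * h) z)).1)) := by
    have hNh : (N : ℝ) * h = Real.pi / 2 := by
      rw [h_def]
      field_simp
    simp only [rotation_succ, smul_eq_mul]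
    rw [← Finset.mul_sum, ← Finset.mul_sum,
      Finset.sum_range_sub' fun i : ℕ ↦ f (rotation (i * h) z).1, hNh]
    simp only [ContinuousLinearMap.rotation_apply, CharP.cast_eq_zero, zero_mul,
      Real.cos_zero, Real.sin_zero, Real.cos_pi_div_two, Real.sin_pi_div_two, one_smul, zero_smul,
      add_zero, zero_add]
    field_simp
  rw [telescope]
  exact convexOn_exp.map_sum_le (fun _ _ ↦ by positivity) (by simp [hN]) (by simp)

variable {X : Type*} [NormedAddCommGroup X] [NormedSpace ℝ X]

lemma lipschitzWith_norm_apply (L : E →L[ℝ] X) : LipschitzWith ‖L‖₊ fun x ↦ ‖L x‖ := by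
  simpa only [one_mul] using! lipschitzWith_one_norm.comp L.lipschitz

lemma norm_sub_norm_rotation_le (L : E →L[ℝ] X) (x : E) :
    ∃ φ : StrongDual ℝ E, ‖φ‖ ≤ ‖L‖ ∧ ∀ (h : ℝ) (y : E),
      ‖L x‖ - ‖L (rotation h (x, y)).1‖ ≤ (1 - Real.cos h) * ‖L x‖ - Real.sin h * φ y := by
  obtain ⟨g, hg_norm, hg_apply⟩ := exists_dual_vector'' ℝ (L x)
  refine ⟨g.comp L, ?_, fun h y ↦ ?_⟩
  · calc ‖g.comp L‖ ≤ ‖g‖ * ‖L‖ := opNorm_comp_le _ _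
      _ ≤ ‖L‖ := mul_le_of_le_one_left (norm_nonneg _) hg_norm
  · have hg_le : g (L (rotation h (x, y)).1) ≤ ‖L (rotation h (x, y)).1‖ :=
      (le_abs_self _).trans (by simpa using g.le_of_opNorm_le hg_norm _)
    have hg_eq : g (L (rotation h (x, y)).1) = Real.cos h * ‖L x‖ + Real.sin h * g (L y) := by
      simp [ContinuousLinearMap.rotation_apply, hg_apply]
    simp only [coe_comp, Function.comp_apply]
    linarith

variable [CompleteSpace E] [SecondCountableTopology E] [MeasurableSpace E] [BorelSpace E]

-- The quarter turn `(x, y) ↦ (y, -x)` is split into `N` small rotations, which all preserve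
-- `μ.prod μ`, so that Jensen's inequality compares it with a single small rotation.
lemma integral_exp_mul_sub_le_integral_rotation (μ : Measure E) [IsGaussian μ] (hμ : μ[id] = 0)
    {f : E → ℝ} {K : NNReal} (hf : LipschitzWith K f) (l : ℝ) {N : ℕ} (hN : N ≠ 0) :
    ∫ z, Real.exp (l * (f z.1 - f z.2)) ∂(μ.prod μ) ≤
      ∫ z, Real.exp (l * N * (f z.1 - f (rotation (Real.pi / (2 * N)) z).1)) ∂(μ.prod μ) := by
  set D : E × E → ℝ := fun z ↦
    Real.exp (l * N * (f z.1 - f (rotation (Real.pi / (2 * N)) z).1))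
  have hDc : Continuous D := by
    have := hf.continuous
    fun_prop
  have hDint : Integrable D (μ.prod μ) := integrable_exp_mul_sub_of_lipschitzWith _ hf
    (fst ℝ E E) ((fst ℝ E E).comp (rotation (Real.pi / (2 * N)))) (l * N)
  have map_rot (θ : ℝ) : (μ.prod μ).map (rotation θ) = μ.prod μ :=
    IsGaussian.map_rotation_eq_self hμ θ
  have hDrot (θ : ℝ) : Integrable (fun z ↦ D (rotation θ z)) (μ.prod μ) := by
    rw [← map_rot θ] at hDint
    exact hDint.comp_measurable (by fun_prop)
  calc ∫ z, Real.exp (l * (f z.1 - f z.2)) ∂(μ.prod μ)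
      ≤ ∫ z, ∑ i ∈ Finset.range N, (1 / N : ℝ) * D (rotation (i * (Real.pi / (2 * N))) z)
          ∂(μ.prod μ) :=
        integral_mono
          (integrable_exp_mul_sub_of_lipschitzWith _ hf (fst ℝ E E) (snd ℝ E E) l)
          (integrable_finsetSum _ fun _ _ ↦ (hDrot _).const_mul _)
          fun z ↦ exp_mul_sub_le_average_rotation f l hN z
    _ = ∑ _i ∈ Finset.range N, (1 / N : ℝ) * ∫ z, D z ∂(μ.prod μ) := by
        rw [integral_finsetSum _ fun _ _ ↦ (hDrot _).const_mul _]
        refine Finset.sum_congr rfl fun _ _ ↦ ?_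
        rw [integral_const_mul, ← integral_map (by fun_prop) (by fun_prop), map_rot]
    _ = ∫ z, D z ∂(μ.prod μ) := by
        rw [Finset.sum_const, Finset.card_range, nsmul_eq_mul]
        field_simp

end Rotation

variable {E : Type*} [NormedAddCommGroup E] [InnerProductSpace ℝ E] [FiniteDimensional ℝ E]
  [MeasurableSpace E] [BorelSpace E] {X : Type*} [NormedAddCommGroup X] [NormedSpace ℝ X]

lemma integrable_exp_mul_norm_apply (μ : Measure E) [IsGaussian μ] (L : E →L[ℝ] X) (l : ℝ) :
    Integrable (fun x ↦ Real.exp (l * ‖L x‖)) μ := by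
  simpa using integrable_exp_mul_sub_of_lipschitzWith μ (lipschitzWith_norm_apply L) (.id ℝ E) 0 l

lemma integral_exp_dual_stdGaussian (φ : StrongDual ℝ E) :
    ∫ x, Real.exp (φ x) ∂(stdGaussian E) = Real.exp (‖φ‖ ^ 2 / 2) := by
  have h := IsGaussian.map_eq_gaussianReal (μ := stdGaussian E) φ
  rw [integral_strongDual_stdGaussian, variance_dual_stdGaussian] at h
  simpa [mgf] using mgf_gaussianReal h 1

lemma integral_exp_norm_sub_norm_rotation_le (L : E →L[ℝ] X) {l : ℝ} (hl : 0 ≤ l) (h : ℝ) :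
    ∫ z, Real.exp (l * (‖L z.1‖ - ‖L (rotation h z).1‖))
        ∂((stdGaussian E).prod (stdGaussian E)) ≤
      mgf (fun x ↦ ‖L x‖) (stdGaussian E) (l * (1 - Real.cos h)) *
        Real.exp ((l * Real.sin h * ‖L‖) ^ 2 / 2) := by
  have h_int : Integrable (fun z : E × E ↦ Real.exp (l * (‖L z.1‖ - ‖L (rotation h z).1‖)))
      ((stdGaussian E).prod (stdGaussian E)) :=
    integrable_exp_mul_sub_of_lipschitzWith _ (lipschitzWith_norm_apply L) (fst ℝ E E)
      ((fst ℝ E E).comp (rotation h)) l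
  rw [integral_prod _ h_int, mgf, ← integral_mul_const]
  refine integral_mono h_int.integral_prod_left
    ((integrable_exp_mul_norm_apply _ L _).mul_const _) fun x ↦ ?_
  obtain ⟨φ, hφ_norm, hφ⟩ := norm_sub_norm_rotation_le L x
  set ψ : StrongDual ℝ E := -(l * Real.sin h) • φ
  calc ∫ y, Real.exp (l * (‖L x‖ - ‖L (rotation h (x, y)).1‖)) ∂(stdGaussian E)
      ≤ ∫ y, Real.exp (l * (1 - Real.cos h) * ‖L x‖) * Real.exp (ψ y) ∂(stdGaussian E) := by
        refine integral_mono_of_nonneg (ae_of_all _ fun y ↦ (Real.exp_pos _).le) ?_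
          (ae_of_all _ fun y ↦ ?_)
        · refine Integrable.const_mul ?_ _
          exact integrable_exp_of_le_add_mul_norm _ (a := 0) (b := ‖ψ‖) ψ.continuous fun y ↦ by
            simpa using (le_abs_self _).trans (ψ.le_opNorm y)
        · simp only [ψ, ← Real.exp_add, FunLike.coe_smul, Pi.smul_apply, smul_eq_mul]
          gcongr
          linarith [mul_le_mul_of_nonneg_left (hφ h y) hl]
    _ = Real.exp (l * (1 - Real.cos h) * ‖L x‖) * Real.exp (‖ψ‖ ^ 2 / 2) := by
        rw [integral_const_mul, integral_exp_dual_stdGaussian]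
    _ ≤ Real.exp (l * (1 - Real.cos h) * ‖L x‖) *
          Real.exp ((l * Real.sin h * ‖L‖) ^ 2 / 2) := by
        simp only [ψ, norm_smul, norm_neg, mul_pow, Real.norm_eq_abs, sq_abs]
        gcongr

lemma natCast_mul_one_sub_cos_le (N : ℕ) :
    N * (1 - Real.cos (Real.pi / (2 * N))) ≤ 2 / N := by
  rcases N.eq_zero_or_pos with rfl | hN
  · simp
  have hcos := Real.one_sub_sq_div_two_le_cos (x := Real.pi / (2 * N))
  calc N * (1 - Real.cos (Real.pi / (2 * N))) ≤ N * ((Real.pi / (2 * N)) ^ 2 / 2) := by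
        gcongr
        linarith
    _ = Real.pi ^ 2 / 8 / N := by field_simp; norm_num
    _ ≤ 2 / N := by
        gcongr
        nlinarith [Real.pi_pos, Real.pi_lt_four]

lemma sq_natCast_mul_sin_le (N : ℕ) : (N * Real.sin (Real.pi / (2 * N))) ^ 2 ≤ 4 := by
  rcases N.eq_zero_or_pos with rfl | hN
  · simp
  have hle : |N * Real.sin (Real.pi / (2 * N))| ≤ 2 := by
    rw [abs_mul, Nat.abs_cast]
    calc (N : ℝ) * |Real.sin (Real.pi / (2 * N))| ≤ N * |Real.pi / (2 * N)| := by
          exact mul_le_mul_of_nonneg_left Real.abs_sin_le_abs N.cast_nonneg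
      _ = Real.pi / 2 := by
          rw [abs_of_pos (by positivity)]
          field_simp
      _ ≤ 2 := by linarith [Real.pi_lt_four]
  calc (N * Real.sin (Real.pi / (2 * N))) ^ 2 ≤ 2 ^ 2 := sq_le_sq.2 (hle.trans (le_abs_self _))
    _ = 4 := by norm_num

lemma integral_exp_mul_norm_sub_norm_le (L : E →L[ℝ] X) {l : ℝ} (hl : 0 ≤ l) :
    ∫ z, Real.exp (l * (‖L z.1‖ - ‖L z.2‖)) ∂((stdGaussian E).prod (stdGaussian E)) ≤
      Real.exp (2 * l ^ 2 * ‖L‖ ^ 2) := by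
  set θ : ℕ → ℝ := fun N ↦ Real.pi / (2 * N)
  set s : ℕ → ℝ := fun N ↦ l * N * (1 - Real.cos (θ N))
  have hbound (N : ℕ) (hN : N ≠ 0) :
      ∫ z, Real.exp (l * (‖L z.1‖ - ‖L z.2‖)) ∂((stdGaussian E).prod (stdGaussian E)) ≤
        mgf (fun x ↦ ‖L x‖) (stdGaussian E) (s N) * Real.exp (2 * l ^ 2 * ‖L‖ ^ 2) := by
    refine (integral_exp_mul_sub_le_integral_rotation _ (by simp) (lipschitzWith_norm_apply L)
      l hN).trans ((integral_exp_norm_sub_norm_rotation_le L (by positivity) _).trans ?_)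
    gcongr
    · exact mgf_nonneg
    · calc (l * N * Real.sin (θ N) * ‖L‖) ^ 2 / 2
          = (N * Real.sin (θ N)) ^ 2 * (l * ‖L‖) ^ 2 / 2 := by ring
        _ ≤ 4 * (l * ‖L‖) ^ 2 / 2 := by
            gcongr
            exact sq_natCast_mul_sin_le N
        _ = 2 * l ^ 2 * ‖L‖ ^ 2 := by ring
  have hs_lim : Filter.Tendsto s Filter.atTop (nhds 0) := by
    refine squeeze_zero (g := fun N : ℕ ↦ l * 2 / N) (fun N ↦ ?_) (fun N ↦ ?_)
      (tendsto_const_div_atTop_nhds_zero_nat _)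
    · exact mul_nonneg (by positivity) (sub_nonneg.2 (Real.cos_le_one _))
    · simp only [s, mul_assoc, mul_div_assoc]
      exact mul_le_mul_of_nonneg_left (natCast_mul_one_sub_cos_le N) hl
  have hmgf := continuous_mgf (integrable_exp_mul_norm_apply (stdGaussian E) L)
  have hlim := ((hmgf.tendsto 0).comp hs_lim).mul_const (Real.exp (2 * l ^ 2 * ‖L‖ ^ 2))
  simpa using ge_of_tendsto hlim (Filter.eventually_atTop.2 ⟨1, fun N hN ↦ hbound N (by omega)⟩)

lemma mgf_sub_integral_le_integral_prod {Ω : Type*} [MeasurableSpace Ω] {μ : Measure Ω}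
    [IsProbabilityMeasure μ] {f : Ω → ℝ} (hf : Integrable f μ)
    (hexp : ∀ l, Integrable (fun x ↦ Real.exp (l * f x)) μ) (l : ℝ) :
    mgf (fun x ↦ f x - ∫ y, f y ∂μ) μ l ≤
      ∫ z, Real.exp (l * (f z.1 - f z.2)) ∂(μ.prod μ) := by
  have jensen : Real.exp (-l * ∫ y, f y ∂μ) ≤ ∫ y, Real.exp (-l * f y) ∂μ := by
    rw [← integral_const_mul]
    exact convexOn_exp.map_integral_le Real.continuous_exp.continuousOn isClosed_univ
      (by simp) (hf.const_mul _) (hexp _)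
  calc mgf (fun x ↦ f x - ∫ y, f y ∂μ) μ l
      = (∫ x, Real.exp (l * f x) ∂μ) * Real.exp (-l * ∫ y, f y ∂μ) := by
        rw [mgf, ← integral_mul_const]
        congr with x
        rw [← Real.exp_add]
        ring_nf
    _ ≤ (∫ x, Real.exp (l * f x) ∂μ) * ∫ y, Real.exp (-l * f y) ∂μ := by
        gcongr
    _ = ∫ z, Real.exp (l * (f z.1 - f z.2)) ∂(μ.prod μ) := by
        rw [← integral_prod_mul]
        congr with z
        rw [← Real.exp_add]
        ring_nf

lemma integrable_norm_apply_stdGaussian (L : E →L[ℝ] X) :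
    Integrable (fun x ↦ ‖L x‖) (stdGaussian E) :=
  (L.integrable_comp IsGaussian.integrable_id).norm

lemma hasSubgaussianMGF_norm_sub_integral (L : E →L[ℝ] X) {K : NNReal} (hL : ‖L‖ ≤ K) :
    HasSubgaussianMGF (fun x ↦ ‖L x‖ - ∫ y, ‖L y‖ ∂(stdGaussian E)) (4 * K ^ 2)
      (stdGaussian E) where
  integrable_exp_mul l := by
    refine integrable_exp_of_le_add_mul_norm _ (a := - (l * ∫ y, ‖L y‖ ∂(stdGaussian E)))
      (b := |l| * ‖L‖) (by fun_prop) fun x ↦ ?_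
    have := mul_le_mul (le_abs_self l) (L.le_opNorm x) (norm_nonneg _) (abs_nonneg l)
    linarith
  mgf_le l := by
    refine (mgf_sub_integral_le_integral_prod (integrable_norm_apply_stdGaussian L)
      (integrable_exp_mul_norm_apply (stdGaussian E) L) l).trans ?_
    have swap : ∫ z, Real.exp (l * (‖L z.1‖ - ‖L z.2‖)) ∂((stdGaussian E).prod (stdGaussian E)) =
        ∫ z, Real.exp (|l| * (‖L z.1‖ - ‖L z.2‖)) ∂((stdGaussian E).prod (stdGaussian E)) := by
      rcases abs_choice l with hl | hl
      · rw [hl]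
      · rw [hl, ← integral_prod_swap]
        congr with z
        simp only [Prod.fst_swap, Prod.snd_swap]
        ring_nf
    rw [swap]
    calc _ ≤ Real.exp (2 * |l| ^ 2 * ‖L‖ ^ 2) :=
          integral_exp_mul_norm_sub_norm_le L (abs_nonneg l)
      _ ≤ Real.exp (2 * |l| ^ 2 * K ^ 2) := by gcongr
      _ = Real.exp ((4 * K ^ 2 : NNReal) * l ^ 2 / 2) := by
          rw [sq_abs]
          push_cast
          ring_nf

lemma measureReal_le_abs_norm_sub_integral_le (L : E →L[ℝ] X) (hL : ‖L‖ ≤ 1) {t : ℝ}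
    (ht : 0 ≤ t) :
    (stdGaussian E).real {x | t ≤ |‖L x‖ - ∫ y, ‖L y‖ ∂(stdGaussian E)|} ≤
      2 * Real.exp (-(t ^ 2 / 8)) := by
  have hsub := hasSubgaussianMGF_norm_sub_integral L (K := 1) (by simpa using hL)
  have exp_eq : Real.exp (-t ^ 2 / (2 * (4 * 1 ^ 2 : NNReal))) = Real.exp (-(t ^ 2 / 8)) := by
    push_cast
    ring_nf
  calc (stdGaussian E).real {x | t ≤ |‖L x‖ - ∫ y, ‖L y‖ ∂(stdGaussian E)|}
      ≤ (stdGaussian E).real {x | t ≤ ‖L x‖ - ∫ y, ‖L y‖ ∂(stdGaussian E)} +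
        (stdGaussian E).real {x | t ≤ -(‖L x‖ - ∫ y, ‖L y‖ ∂(stdGaussian E))} :=
        (measureReal_mono fun _ ↦ (le_abs.1 : t ≤ |_| → t ≤ _ ∨ t ≤ -_)).trans
          (measureReal_union_le _ _)
    _ ≤ Real.exp (-(t ^ 2 / 8)) + Real.exp (-(t ^ 2 / 8)) :=
        add_le_add ((hsub.measure_ge_le ht).trans_eq exp_eq)
          ((hsub.neg.measure_ge_le ht).trans_eq exp_eq)
    _ = 2 * Real.exp (-(t ^ 2 / 8)) := by ring

end GaussianConcentration

section DvoretzkyRogers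

variable {E : Type*} [NormedAddCommGroup E] [InnerProductSpace ℝ E] [FiniteDimensional ℝ E]
  {X : Type*} [NormedAddCommGroup X] [NormedSpace ℝ X]

-- `T` maximises the volume of the image of the unit ball among the contractions `E → X`.
lemma exists_norm_le_one_forall_abs_det_le [FiniteDimensional ℝ X]
    (h : finrank ℝ E = finrank ℝ X) :
    ∃ T : E →L[ℝ] X, ‖T‖ ≤ 1 ∧ ∀ A : E →L[ℝ] E, |A.det| ≤ ‖T.comp A‖ ^ finrank ℝ E := by
  have e : X ≃L[ℝ] E := ContinuousLinearEquiv.ofFinrankEq h.symm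
  set vol : (E →L[ℝ] X) → ℝ := fun S ↦ |((e : X →L[ℝ] E).comp S).det| with hvol
  have vol_continuous : Continuous vol := (ContinuousLinearMap.continuous_det.comp
    ((ContinuousLinearMap.compL ℝ E X E e).continuous)).abs
  have vol_smul (c : ℝ) (S : E →L[ℝ] X) : vol (c • S) = |c| ^ finrank ℝ E * vol S := by
    simp only [hvol, ContinuousLinearMap.comp_smul, ContinuousLinearMap.det,
      ContinuousLinearMap.toLinearMap_smul, LinearMap.det_smul, abs_mul, abs_pow]
  have vol_comp (S : E →L[ℝ] X) (A : E →L[ℝ] E) : vol (S.comp A) = vol S * |A.det| := by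
    simp only [hvol, ← ContinuousLinearMap.comp_assoc]
    rw [ContinuousLinearMap.det, ContinuousLinearMap.toLinearMap_comp _ A, LinearMap.det_comp,
      abs_mul]
  have : ProperSpace (E →L[ℝ] X) := FiniteDimensional.proper ℝ _
  obtain ⟨T, hT_norm, hT_max⟩ := (isCompact_closedBall (0 : E →L[ℝ] X) 1).exists_isMaxOn
    ⟨0, by simp⟩ vol_continuous.continuousOn
  have vol_le (S : E →L[ℝ] X) : vol S ≤ ‖S‖ ^ finrank ℝ E * vol T := by
    calc vol S = vol (‖S‖ • ‖S‖⁻¹ • S) := by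
          rcases eq_or_ne S 0 with rfl | hS
          · simp
          · rw [smul_inv_smul₀ (norm_ne_zero_iff.2 hS)]
      _ = ‖S‖ ^ finrank ℝ E * vol (‖S‖⁻¹ • S) := by rw [vol_smul, abs_norm]
      _ ≤ ‖S‖ ^ finrank ℝ E * vol T := by
          gcongr
          exact hT_max (by simpa [norm_smul] using inv_mul_le_one)
  have vol_pos : 0 < vol T := by
    refine pos_of_mul_pos_right (a := ‖(e.symm : E →L[ℝ] X)‖ ^ finrank ℝ E) ?_ (by positivity)
    refine lt_of_lt_of_le ?_ (vol_le e.symm)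
    simp [hvol, ContinuousLinearMap.det]
  refine ⟨T, by simpa using hT_norm, fun A ↦ le_of_mul_le_mul_left ?_ vol_pos⟩
  rw [← vol_comp, mul_comm]
  exact vol_le _

lemma det_one_add_starProjection (K : Submodule ℝ E) :
    (1 + K.starProjection : E →L[ℝ] E).det = 2 ^ finrank ℝ K := by
  let e := K.prodEquivOfIsCompl _ K.isCompl_orthogonal
  have hconj : (e.symm : E →ₗ[ℝ] K × Kᗮ) ∘ₗ (1 + K.starProjection : E →L[ℝ] E).toLinearMap ∘ₗ
      (e.symm.symm : K × Kᗮ →ₗ[ℝ] E) = LinearMap.prodMap ((2 : ℝ) • 1) 1 := by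
    rw [LinearEquiv.symm_symm, LinearEquiv.toLinearMap_symm_comp_eq]
    refine LinearMap.prod_ext (LinearMap.ext fun x ↦ ?_) (LinearMap.ext fun y ↦ ?_)
    · simp [e, two_smul]
    · simp [e, (Submodule.starProjection_apply_eq_zero_iff K).2 y.2]
  rw [ContinuousLinearMap.det, ← LinearMap.det_conj _ e.symm, hconj, LinearMap.det_prodMap,
    LinearMap.det_smul]
  simp

-- Otherwise `‖T ∘ (1 + P)‖ ≤ 5 / 4` for the projection `P` onto `K`, contradicting `hdet` because
-- `(5 / 4) ^ 2 < 2`.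
lemma exists_mem_norm_eq_one_le_norm_apply {T : E →L[ℝ] X} (hT : ‖T‖ ≤ 1)
    (hdet : ∀ A : E →L[ℝ] E, |A.det| ≤ ‖T.comp A‖ ^ finrank ℝ E) {K : Submodule ℝ E}
    (hK : finrank ℝ E ≤ 2 * finrank ℝ K) (hK0 : finrank ℝ K ≠ 0) :
    ∃ x ∈ K, ‖x‖ = 1 ∧ 1 / 4 ≤ ‖T x‖ := by
  by_contra! hlt
  have norm_apply_le {x : E} (hx : x ∈ K) : ‖T x‖ ≤ 1 / 4 * ‖x‖ := by
    rcases eq_or_ne x 0 with rfl | hx0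
    · simp
    · have h := hlt (‖x‖⁻¹ • x) (K.smul_mem _ hx) (norm_smul_inv_norm hx0)
      rw [map_smul, norm_smul, norm_inv, norm_norm,
        inv_mul_lt_iff₀ (norm_pos_iff.2 hx0)] at h
      linarith
  have norm_comp_le : ‖T.comp (1 + K.starProjection)‖ ≤ 5 / 4 := by
    refine ContinuousLinearMap.opNorm_le_bound _ (by norm_num) fun x ↦ ?_
    calc ‖(T.comp (1 + K.starProjection)) x‖ = ‖T x + T (K.starProjection x)‖ := by simp
      _ ≤ ‖T x‖ + ‖T (K.starProjection x)‖ := norm_add_le _ _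
      _ ≤ 1 * ‖x‖ + 1 / 4 * ‖K.starProjection x‖ :=
          add_le_add (T.le_of_opNorm_le hT x)
            (norm_apply_le (Submodule.starProjection_apply_mem _ _))
      _ ≤ 1 * ‖x‖ + 1 / 4 * ‖x‖ := by
          gcongr
          exact Submodule.norm_starProjection_apply_le _ _
      _ = 5 / 4 * ‖x‖ := by ring
  have : (2 : ℝ) ^ finrank ℝ K < 2 ^ finrank ℝ K :=
    calc (2 : ℝ) ^ finrank ℝ K ≤ ‖T.comp (1 + K.starProjection)‖ ^ finrank ℝ E := by
          simpa [det_one_add_starProjection] using hdet (1 + K.starProjection)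
      _ ≤ (5 / 4) ^ finrank ℝ E := by gcongr
      _ ≤ (5 / 4) ^ (2 * finrank ℝ K) := pow_le_pow_right₀ (by norm_num) hK
      _ = ((5 / 4) ^ 2) ^ finrank ℝ K := pow_mul _ _ _
      _ < 2 ^ finrank ℝ K := pow_lt_pow_left₀ (by norm_num) (by positivity) hK0
  exact this.false

lemma exists_orthonormal_of_forall_submodule {p : E → Prop} {m : ℕ}
    (hp : ∀ K : Submodule ℝ E, finrank ℝ E < finrank ℝ K + m → ∃ x ∈ K, ‖x‖ = 1 ∧ p x) :
    ∃ u : Fin m → E, Orthonormal ℝ u ∧ ∀ i, p (u i) := by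
  induction m with
  | zero => exact ⟨Fin.elim0, .of_isEmpty _, fun i ↦ i.elim0⟩
  | succ m ih =>
    obtain ⟨u, hu, hpu⟩ := ih fun K hK ↦ hp K (by omega)
    have hspan : finrank ℝ (Submodule.span ℝ (Set.range u)) = m := by
      rw [finrank_span_eq_card hu.linearIndependent, Fintype.card_fin]
    have hcompl := (Submodule.span ℝ (Set.range u)).finrank_add_finrank_orthogonal
    obtain ⟨x, hx_orth, hx_norm, hpx⟩ := hp (Submodule.span ℝ (Set.range u))ᗮ (by omega)
    refine ⟨Matrix.vecCons x u, orthonormal_vecCons_iff.2 ⟨hx_norm, fun i ↦ ?_, hu⟩,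
      Fin.cases hpx hpu⟩
    exact (Submodule.mem_orthogonal' _ _).1 hx_orth _ (Submodule.subset_span ⟨i, rfl⟩)

theorem exists_continuousLinearMap_le_norm_single [FiniteDimensional ℝ X] {m : ℕ}
    (hm : 2 * m ≤ finrank ℝ X) :
    ∃ L : EuclideanSpace ℝ (Fin m) →L[ℝ] X,
      ‖L‖ ≤ 1 ∧ ∀ i, 1 / 4 ≤ ‖L (EuclideanSpace.single i 1)‖ := by
  let E := EuclideanSpace ℝ (Fin (finrank ℝ X))
  have hE : finrank ℝ E = finrank ℝ X := finrank_euclideanSpace_fin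
  obtain ⟨T, hT_norm, hT_det⟩ := exists_norm_le_one_forall_abs_det_le hE
  obtain ⟨u, hu, hTu⟩ := exists_orthonormal_of_forall_submodule (E := E) (m := m)
    (p := fun x ↦ 1 / 4 ≤ ‖T x‖) fun K hK ↦
      exists_mem_norm_eq_one_le_norm_apply hT_norm hT_det (by omega) (by omega)
  let b := EuclideanSpace.basisFun (Fin m) ℝ
  have hbu : b.toBasis.constr ℝ u ∘ b.toBasis = u := by
    ext1 i
    simp
  let J : EuclideanSpace ℝ (Fin m) →ₗᵢ[ℝ] E := (b.toBasis.constr ℝ u).isometryOfOrthonormal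
    (v := b.toBasis) (by simp) (by rwa [hbu])
  have hJ (i : Fin m) : J (EuclideanSpace.single i 1) = u i := by
    rw [← EuclideanSpace.basisFun_apply, ← b.coe_toBasis]
    exact congrFun hbu i
  refine ⟨T.comp J.toContinuousLinearMap, ?_, fun i ↦ by simpa [hJ] using hTu i⟩
  exact (T.opNorm_comp_le _).trans
    (mul_le_one₀ hT_norm (norm_nonneg _) J.norm_toContinuousLinearMap_le)

end DvoretzkyRogers

section MeanLowerBound

open MeasureTheory ProbabilityTheory InnerProductSpace

lemma gaussianReal_real_Icc_neg_le {t : ℝ} (ht : 0 ≤ t) :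
    (gaussianReal 0 1).real (Set.Icc (-t) t) ≤ 1 - Real.exp (-(t + 1) ^ 2 / 2) / 3 := by
  have pdf_ge {x : ℝ} (hx : x ∈ Set.Ioc t (t + 1)) :
      Real.exp (-(t + 1) ^ 2 / 2) / 3 ≤ gaussianPDFReal 0 1 x := by
    have hsqrt : √(2 * Real.pi * (1 : NNReal)) ≤ 3 := by
      rw [Real.sqrt_le_left (by norm_num), NNReal.coe_one]
      linarith [Real.pi_lt_four]
    have hsq : x ^ 2 ≤ (t + 1) ^ 2 := pow_le_pow_left₀ (ht.trans hx.1.le) hx.2 2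
    rw [gaussianPDFReal, div_eq_inv_mul]
    gcongr (?_)⁻¹ * Real.exp ?_
    rw [sub_zero, NNReal.coe_one]
    linarith
  have tail_ge : Real.exp (-(t + 1) ^ 2 / 2) / 3 ≤ (gaussianReal 0 1).real (Set.Ioc t (t + 1)) := by
    rw [measureReal_def, gaussianReal_apply_eq_integral 0 one_ne_zero,
      ENNReal.toReal_ofReal (setIntegral_nonneg measurableSet_Ioc
        fun x _ ↦ gaussianPDFReal_nonneg 0 1 x)]
    simpa using setIntegral_ge_of_const_le_real measurableSet_Ioc (by simp)
      (fun x hx ↦ pdf_ge hx) (integrable_gaussianPDFReal 0 1).integrableOn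
  have hdisj : Disjoint (Set.Icc (-t) t) (Set.Ioc t (t + 1)) :=
    Set.disjoint_left.2 fun x hx hx' ↦ hx.2.not_gt hx'.1
  have hunion := measureReal_union (μ := gaussianReal 0 1) hdisj measurableSet_Ioc
  have : (gaussianReal 0 1).real (Set.Icc (-t) t ∪ Set.Ioc t (t + 1)) ≤ 1 := measureReal_le_one
  linarith

lemma measurableSet_forall_abs_le (ι : Type*) [Finite ι] (t : ℝ) :
    MeasurableSet {x : EuclideanSpace ℝ ι | ∀ i, |x i| ≤ t} := by
  measurability

lemma stdGaussian_real_forall_abs_le_le (ι : Type*) [Fintype ι] {t : ℝ} (ht : 0 ≤ t) :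
    (stdGaussian (EuclideanSpace ℝ ι)).real {x | ∀ i, |x i| ≤ t} ≤
      Real.exp (-(Fintype.card ι * Real.exp (-(t + 1) ^ 2 / 2) / 3)) := by
  set p := Real.exp (-(t + 1) ^ 2 / 2) / 3
  have hp : (gaussianReal 0 1).real (Set.Icc (-t) t) ≤ 1 - p := gaussianReal_real_Icc_neg_le ht
  have hpre : WithLp.toLp 2 ⁻¹' {x : EuclideanSpace ℝ ι | ∀ i, |x i| ≤ t} =
      Set.univ.pi fun _ ↦ Set.Icc (-t) t := by
    ext x
    simp only [Set.mem_preimage, Set.mem_ofPred_eq, abs_le, Set.mem_univ_pi, Set.mem_Icc]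
  calc (stdGaussian (EuclideanSpace ℝ ι)).real {x | ∀ i, |x i| ≤ t}
      = (gaussianReal 0 1).real (Set.Icc (-t) t) ^ Fintype.card ι := by
        rw [← map_pi_eq_stdGaussian,
          map_measureReal_apply (by fun_prop) (measurableSet_forall_abs_le ι t), hpre,
          measureReal_def, Measure.pi_pi, ENNReal.toReal_prod, Finset.prod_const,
          Finset.card_univ, measureReal_def]
    _ ≤ (1 - p) ^ Fintype.card ι := by gcongr
    _ ≤ Real.exp (-p) ^ Fintype.card ι := by
        gcongr
        · exact measureReal_nonneg.trans hp
        · exact Real.one_sub_le_exp_neg p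
    _ = Real.exp (-(Fintype.card ι * Real.exp (-(t + 1) ^ 2 / 2) / 3)) := by
        rw [← Real.exp_nat_mul]
        congr 1
        ring

-- `x` and its reflection `σ x` have the same law and `x + σ x = 2 ⟪e, x⟫ e`.
lemma mul_measureReal_le_setIntegral_norm {E X : Type*} [NormedAddCommGroup E]
    [InnerProductSpace ℝ E] [FiniteDimensional ℝ E] [MeasurableSpace E] [BorelSpace E]
    [NormedAddCommGroup X] [NormedSpace ℝ X] (L : E →L[ℝ] X) {e : E} (he : ‖e‖ = 1) {A : Set E}
    (hA : MeasurableSet A) (hA_refl : (ℝ ∙ e).reflection ⁻¹' A = A) {t : ℝ}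
    (ht : ∀ x ∈ A, t ≤ |⟪e, x⟫_ℝ|) :
    t * ‖L e‖ * (stdGaussian E).real A ≤ ∫ x in A, ‖L x‖ ∂(stdGaussian E) := by
  set σ := (ℝ ∙ e).reflection
  have hσ : MeasurePreserving σ (stdGaussian E) (stdGaussian E) :=
    ⟨σ.continuous.measurable, stdGaussian_map σ⟩
  have add_refl (x : E) : x + σ x = (2 * ⟪e, x⟫_ℝ) • e := by
    simp only [σ, Submodule.reflection_apply, Submodule.starProjection_unit_singleton ℝ he]
    module
  have h_int := (integrable_norm_apply_stdGaussian L).integrableOn (s := A)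
  have h_int_σ : IntegrableOn (fun x ↦ ‖L (σ x)‖) A (stdGaussian E) :=
    (hσ.integrable_comp_of_integrable (integrable_norm_apply_stdGaussian L)).integrableOn
  have setIntegral_σ : ∫ x in A, ‖L (σ x)‖ ∂(stdGaussian E) = ∫ x in A, ‖L x‖ ∂(stdGaussian E) := by
    conv_lhs => rw [← hA_refl]
    exact hσ.setIntegral_preimage_emb σ.toHomeomorph.measurableEmbedding (fun x ↦ ‖L x‖) A
  have norm_add_norm_ge {x : E} (hx : x ∈ A) : 2 * (t * ‖L e‖) ≤ ‖L x‖ + ‖L (σ x)‖ :=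
    calc 2 * (t * ‖L e‖) ≤ 2 * (|⟪e, x⟫_ℝ| * ‖L e‖) := by
          gcongr
          exact ht x hx
      _ = ‖L (x + σ x)‖ := by
          rw [add_refl, map_smul, norm_smul, norm_mul, Real.norm_two, Real.norm_eq_abs, mul_assoc]
      _ ≤ ‖L x‖ + ‖L (σ x)‖ := by
          rw [map_add]
          exact norm_add_le _ _
  have := setIntegral_ge_of_const_le_real hA (measure_ne_top _ _)
    (fun x hx ↦ norm_add_norm_ge hx) (h_int.add h_int_σ)
  rw [integral_add h_int h_int_σ, setIntegral_σ] at this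
  linarith

variable {ι : Type*} [Fintype ι] [LinearOrder ι]
  {X : Type*} [NormedAddCommGroup X] [NormedSpace ℝ X]

-- Decompose the event according to the first coordinate exceeding `t`.
lemma mul_measureReal_exists_lt_abs_le_integral_norm (L : EuclideanSpace ℝ ι →L[ℝ] X) {c : ℝ}
    (hL : ∀ i, c ≤ ‖L (EuclideanSpace.single i 1)‖) {t : ℝ} (ht : 0 ≤ t) :
    t * c * (stdGaussian (EuclideanSpace ℝ ι)).real {x | ∃ i, t < |x i|} ≤
      ∫ x, ‖L x‖ ∂(stdGaussian (EuclideanSpace ℝ ι)) := by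
  set μ := stdGaussian (EuclideanSpace ℝ ι)
  set A : ι → Set (EuclideanSpace ℝ ι) := fun i ↦ {x | t < |x i| ∧ ∀ j < i, |x j| ≤ t}
  have hA_meas (i : ι) : MeasurableSet (A i) := by measurability
  have hA_disj : Pairwise (Function.onFun Disjoint A) := by
    refine (Std.Symm.pairwise_on (r := Disjoint) A).2 fun i j hij ↦ ?_
    exact Set.disjoint_left.2 fun x hx hx' ↦ (hx'.2 i hij).not_gt hx.1
  have hA_union : {x | ∃ i, t < |x i|} = ⋃ i, A i := by
    ext x
    refine ⟨fun hx ↦ ?_, fun hx ↦ ?_⟩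
    · obtain ⟨i, hi, hmin⟩ := WellFounded.has_min wellFounded_lt {i | t < |x i|} hx
      exact Set.mem_iUnion.2 ⟨i, hi, fun j hj ↦ not_lt.1 fun h ↦ hmin j h hj⟩
    · obtain ⟨i, hi⟩ := Set.mem_iUnion.1 hx
      exact ⟨i, hi.1⟩
  have abs_refl (i j : ι) (x : EuclideanSpace ℝ ι) :
      |(ℝ ∙ EuclideanSpace.single i (1 : ℝ)).reflection x j| = |x j| := by
    rw [Submodule.reflection_apply, Submodule.starProjection_unit_singleton ℝ (by simp)]
    rcases eq_or_ne j i with rfl | hij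
    · simp [EuclideanSpace.inner_single_left, two_mul]
    · simp [hij]
  have hA_integral (i : ι) : t * c * μ.real (A i) ≤ ∫ x in A i, ‖L x‖ ∂μ := by
    refine le_trans (by gcongr; exact hL i) (mul_measureReal_le_setIntegral_norm L (by simp)
      (hA_meas i) ?_ fun x hx ↦ ?_)
    · ext x
      simp only [A, Set.mem_preimage, Set.mem_ofPred_eq, abs_refl]
    · simpa [EuclideanSpace.inner_single_left] using hx.1.le
  calc t * c * μ.real {x | ∃ i, t < |x i|} = ∑ i, t * c * μ.real (A i) := by
        rw [hA_union, measureReal_iUnion_fintype hA_disj hA_meas, Finset.mul_sum]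
    _ ≤ ∑ i, ∫ x in A i, ‖L x‖ ∂μ := Finset.sum_le_sum fun i _ ↦ hA_integral i
    _ = ∫ x in ⋃ i, A i, ‖L x‖ ∂μ :=
        (integral_iUnion_fintype hA_meas hA_disj fun i ↦
          (integrable_norm_apply_stdGaussian L).integrableOn).symm
    _ ≤ ∫ x, ‖L x‖ ∂μ :=
        setIntegral_le_integral (integrable_norm_apply_stdGaussian L)
          (ae_of_all _ fun x ↦ norm_nonneg _)

lemma mul_sqrt_log_card_le_integral_norm (L : EuclideanSpace ℝ ι →L[ℝ] X) {c : ℝ} (hc : 0 ≤ c)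
    (hL : ∀ i, c ≤ ‖L (EuclideanSpace.single i 1)‖) (hcard : 5 ≤ Real.log (Fintype.card ι)) :
    c / 4 * √(Real.log (Fintype.card ι)) ≤ ∫ x, ‖L x‖ ∂(stdGaussian (EuclideanSpace ℝ ι)) := by
  set ℓ := Real.log (Fintype.card ι)
  have sqrt_ge : 2 ≤ √ℓ := Real.le_sqrt_of_sq_le (by linarith)
  have card_eq : (Fintype.card ι : ℝ) = Real.exp ℓ := by
    refine (Real.exp_log (lt_of_le_of_ne (by positivity) fun h ↦ ?_)).symm
    simp [ℓ, ← h] at hcard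
    linarith
  have prob_box_le : (stdGaussian (EuclideanSpace ℝ ι)).real {x | ∀ i, |x i| ≤ √ℓ - 1} ≤ 1 / 2 :=
    calc (stdGaussian (EuclideanSpace ℝ ι)).real {x | ∀ i, |x i| ≤ √ℓ - 1}
        ≤ Real.exp (-(Fintype.card ι * Real.exp (-(√ℓ - 1 + 1) ^ 2 / 2) / 3)) :=
          stdGaussian_real_forall_abs_le_le ι (by linarith)
      _ = Real.exp (-(Real.exp (ℓ / 2) / 3)) := by
          rw [sub_add_cancel, Real.sq_sqrt (by linarith), card_eq, ← Real.exp_add]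
          ring_nf
      _ ≤ Real.exp (-1) := by
          gcongr
          linarith [Real.add_one_le_exp (ℓ / 2)]
      _ ≤ 1 / 2 := by
          rw [Real.exp_neg, one_div]
          exact inv_anti₀ two_pos (by linarith [Real.exp_one_gt_d9])
  have prob_ge : 1 / 2 ≤ (stdGaussian (EuclideanSpace ℝ ι)).real {x | ∃ i, √ℓ - 1 < |x i|} := by
    have hset : {x : EuclideanSpace ℝ ι | ∃ i, √ℓ - 1 < |x i|} =
        {x : EuclideanSpace ℝ ι | ∀ i, |x i| ≤ √ℓ - 1}ᶜ := by
      ext x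
      simp
    rw [hset, probReal_compl_eq_one_sub (measurableSet_forall_abs_le ι _)]
    linarith
  calc c / 4 * √ℓ = √ℓ / 2 * c * (1 / 2) := by ring
    _ ≤ (√ℓ - 1) * c * (stdGaussian (EuclideanSpace ℝ ι)).real {x | ∃ i, √ℓ - 1 < |x i|} := by
        have : 0 ≤ √ℓ - 1 := by linarith
        gcongr
        linarith
    _ ≤ ∫ x, ‖L x‖ ∂(stdGaussian (EuclideanSpace ℝ ι)) :=
        mul_measureReal_exists_lt_abs_le_integral_norm L hL (by linarith)

end MeanLowerBound

section NearlyEuclidean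

open MeasureTheory ProbabilityTheory

variable {E : Type*} [NormedAddCommGroup E] [InnerProductSpace ℝ E] [FiniteDimensional ℝ E]
  [MeasurableSpace E] [BorelSpace E] {ι : Type*} [Fintype ι]
  {X : Type*} [NormedAddCommGroup X] [NormedSpace ℝ X]

lemma stdGaussian_map_of_norm_adjoint_apply {F : Type*} [NormedAddCommGroup F]
    [InnerProductSpace ℝ F] [FiniteDimensional ℝ F] [MeasurableSpace F] [BorelSpace F]
    (S : F →L[ℝ] E) (hS : ∀ t, ‖S.adjoint t‖ = ‖t‖) :
    (stdGaussian F).map S = stdGaussian E := by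
  have := Measure.isProbabilityMeasure_map (μ := stdGaussian F) S.continuous.measurable.aemeasurable
  refine Measure.ext_of_charFun (funext fun t ↦ ?_)
  rw [charFun_apply, integral_map S.continuous.measurable.aemeasurable (by fun_prop)]
  simp only [← ContinuousLinearMap.adjoint_inner_right, ← charFun_apply]
  rw [charFun_stdGaussian, charFun_stdGaussian, hS]

lemma stdGaussian_map_sum_smul_proj {a : ι → ℝ} (ha : ∑ i, a i ^ 2 = 1) :
    (stdGaussian (PiLp 2 fun _ : ι ↦ E)).map (∑ i, a i • PiLp.proj 2 (fun _ ↦ E) i :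
      (PiLp 2 fun _ : ι ↦ E) →L[ℝ] E) = stdGaussian E := by
  refine stdGaussian_map_of_norm_adjoint_apply _ fun t ↦ ?_
  have adjoint_apply : (∑ i, a i • PiLp.proj 2 (fun _ ↦ E) i :
      (PiLp 2 fun _ : ι ↦ E) →L[ℝ] E).adjoint t = WithLp.toLp 2 fun i ↦ a i • t := by
    refine ext_inner_left ℝ fun x ↦ ?_
    rw [ContinuousLinearMap.adjoint_inner_right]
    simp [PiLp.inner_apply, sum_inner, inner_smul_left, inner_smul_right]
  rw [adjoint_apply, PiLp.norm_eq_of_L2]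
  simp only [norm_smul, mul_pow, Real.norm_eq_abs, sq_abs]
  rw [← Finset.sum_mul, ha, one_mul, Real.sqrt_sq (norm_nonneg t)]

/-- The norm of every linear combination of `v` with coefficients in `s` agrees with `M` times the
Euclidean norm of the coefficient vector, up to a relative error `η`. -/
def NearlyEuclideanOn (v : ι → X) (s : Finset ℝ) (M η : ℝ) : Prop :=
  ∀ a : ι → ℝ, (∀ i, a i ∈ s) →
    |‖∑ i, a i • v i‖ - M * √(∑ i, a i ^ 2)| ≤ η * M * √(∑ i, a i ^ 2)

lemma measureReal_lt_abs_norm_sum_smul_sub_le (L : E →L[ℝ] X) (hL : ‖L‖ ≤ 1) {t : ℝ} (ht : 0 ≤ t)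
    (a : ι → ℝ) :
    (stdGaussian (PiLp 2 fun _ : ι ↦ E)).real {g | t * √(∑ i, a i ^ 2) <
      |‖∑ i, a i • L (g i)‖ - (∫ x, ‖L x‖ ∂(stdGaussian E)) * √(∑ i, a i ^ 2)|} ≤
        2 * Real.exp (-(t ^ 2 / 8)) := by
  set M := ∫ x, ‖L x‖ ∂(stdGaussian E)
  set r := √(∑ i, a i ^ 2)
  have sum_nonneg : 0 ≤ ∑ i, a i ^ 2 := Finset.sum_nonneg fun i _ ↦ sq_nonneg (a i)
  have r_nonneg : 0 ≤ r := Real.sqrt_nonneg _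
  rcases r_nonneg.eq_or_lt with r_zero | r_pos
  · have a_zero (i : ι) : a i = 0 := by
      simpa using (Finset.sum_eq_zero_iff_of_nonneg fun i _ ↦ sq_nonneg (a i)).1
        ((Real.sqrt_eq_zero sum_nonneg).1 r_zero.symm) i
    rw [← r_zero]
    simp [a_zero, Real.exp_nonneg]
  have sum_sq : ∑ i, (a i / r) ^ 2 = 1 := by
    simp only [div_pow]
    rw [← Finset.sum_div, Real.sq_sqrt sum_nonneg, div_self (Real.sqrt_pos.1 r_pos).ne']
  set S : (PiLp 2 fun _ : ι ↦ E) →L[ℝ] E := ∑ i, (a i / r) • PiLp.proj 2 (fun _ ↦ E) i with hS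
  have norm_sum_eq (g : PiLp 2 fun _ : ι ↦ E) : ‖∑ i, a i • L (g i)‖ = r * ‖L (S g)‖ := by
    have : ∑ i, a i • L (g i) = r • L (S g) := by
      simp only [S, map_sum, sum_apply, smul_apply, map_smul, PiLp.proj_apply, Finset.smul_sum,
        smul_smul, mul_div_cancel₀ _ r_pos.ne']
    rw [this, norm_smul, Real.norm_of_nonneg r_nonneg]
  have hmeas : MeasurableSet {x : E | t ≤ |‖L x‖ - M|} :=
    (isClosed_le (by fun_prop) (by fun_prop)).measurableSet
  calc _ ≤ (stdGaussian (PiLp 2 fun _ : ι ↦ E)).real (S ⁻¹' {x | t ≤ |‖L x‖ - M|}) := by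
        refine measureReal_mono fun g hg ↦ ?_
        rw [Set.mem_ofPred_eq, norm_sum_eq, mul_comm M, ← mul_sub, abs_mul, abs_of_pos r_pos,
          mul_comm r] at hg
        exact (lt_of_mul_lt_mul_right hg r_nonneg).le
    _ = (stdGaussian E).real {x | t ≤ |‖L x‖ - M|} := by
        rw [← map_measureReal_apply S.continuous.measurable hmeas, hS,
          stdGaussian_map_sum_smul_proj sum_sq]
    _ ≤ 2 * Real.exp (-(t ^ 2 / 8)) := measureReal_le_abs_norm_sub_integral_le L hL ht

theorem exists_nearlyEuclideanOn (L : E →L[ℝ] X) (hL : ‖L‖ ≤ 1) (s : Finset ℝ) {η : ℝ}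
    (hη : 0 ≤ η)
    (hs : (s.card : ℝ) ^ Fintype.card ι *
      (2 * Real.exp (-((η * ∫ x, ‖L x‖ ∂(stdGaussian E)) ^ 2 / 8))) < 1) :
    ∃ v : ι → X, NearlyEuclideanOn v s (∫ x, ‖L x‖ ∂(stdGaussian E)) η := by
  classical
  set M := ∫ x, ‖L x‖ ∂(stdGaussian E)
  have hM : 0 ≤ η * M := mul_nonneg hη (integral_nonneg fun x ↦ norm_nonneg _)
  let bad (a : ι → ℝ) : Set (PiLp 2 fun _ : ι ↦ E) := {g | η * M * √(∑ i, a i ^ 2) <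
    |‖∑ i, a i • L (g i)‖ - M * √(∑ i, a i ^ 2)|}
  have prob_union_lt : (stdGaussian (PiLp 2 fun _ : ι ↦ E)).real
      (⋃ a ∈ Fintype.piFinset fun _ : ι ↦ s, bad a) < 1 :=
    calc _ ≤ ∑ a ∈ Fintype.piFinset fun _ : ι ↦ s, 2 * Real.exp (-((η * M) ^ 2 / 8)) :=
          (measureReal_biUnion_finset_le _ _).trans <| Finset.sum_le_sum fun a _ ↦
            measureReal_lt_abs_norm_sum_smul_sub_le L hL hM a
      _ = (s.card : ℝ) ^ Fintype.card ι * (2 * Real.exp (-((η * M) ^ 2 / 8))) := by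
          rw [Finset.sum_const, Fintype.card_piFinset, Finset.prod_const, Finset.card_univ,
            nsmul_eq_mul, Nat.cast_pow]
      _ < 1 := hs
  obtain ⟨g, hg⟩ : ∃ g, g ∉ ⋃ a ∈ Fintype.piFinset fun _ : ι ↦ s, bad a := by
    refine (Set.ne_univ_iff_exists_notMem _).1 fun h ↦ ?_
    rw [h, probReal_univ] at prob_union_lt
    exact lt_irrefl _ prob_union_lt
  exact ⟨fun i ↦ L (g i), fun a ha ↦ not_lt.1 fun h ↦
    hg (Set.mem_biUnion (Fintype.mem_piFinset.2 ha) h)⟩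

end NearlyEuclidean

section PolynomialFamilies

open MeasureTheory Filter Topology

/-- The functions `(t, x) ↦ f t x` that are polynomial in `t` with coefficients continuous in `x`,
encoded as the image of `C(E, ℝ)[X]` under evaluation at the constant functions `t`. They serve to
carry identities between integrals from small `t` to all `t`. -/
noncomputable def polynomialFamilies (E : Type*) [TopologicalSpace E] :
    Subalgebra ℝ (ℝ → E → ℝ) :=
  (AlgHom.pi fun t ↦ (ContinuousMap.coeFnAlgHom ℝ).comp
    ((Polynomial.aeval (ContinuousMap.const E t)).restrictScalars ℝ) :
      Polynomial C(E, ℝ) →ₐ[ℝ] ℝ → E → ℝ).range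

section Membership

variable {E : Type*} [TopologicalSpace E]

lemma mem_polynomialFamilies_iff {f : ℝ → E → ℝ} : f ∈ polynomialFamilies E ↔
    ∃ P : Polynomial C(E, ℝ), ∀ t x, P.eval (ContinuousMap.const E t) x = f t x := by
  simp only [polynomialFamilies, AlgHom.mem_range, funext_iff]
  rfl

lemma const_mem_polynomialFamilies {φ : E → ℝ} (hφ : Continuous φ) :
    (fun _ ↦ φ) ∈ polynomialFamilies E :=
  mem_polynomialFamilies_iff.2 ⟨Polynomial.C ⟨φ, hφ⟩, fun t x ↦ by simp⟩

lemma parameter_mem_polynomialFamilies : (fun t _ ↦ t) ∈ polynomialFamilies E :=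
  mem_polynomialFamilies_iff.2 ⟨Polynomial.X, fun t x ↦ by simp⟩

lemma eval_mem_polynomialFamilies (p : Polynomial ℝ) {f : ℝ → E → ℝ}
    (hf : f ∈ polynomialFamilies E) : (fun t x ↦ p.eval (f t x)) ∈ polynomialFamilies E := by
  convert (Polynomial.aeval (⟨f, hf⟩ : polynomialFamilies E) p).2
  rw [← Subalgebra.aeval_coe]
  simp [Polynomial.eval_eq_sum_range, Polynomial.aeval_eq_sum_range]

end Membership

lemma norm_add_smul_sq_mem_polynomialFamilies {E : Type*} [NormedAddCommGroup E]
    [InnerProductSpace ℝ E] {g : E → E} (hg : Continuous g) :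
    (fun t x ↦ ‖x + t • g x‖ ^ 2) ∈ polynomialFamilies E := by
  have expand : (fun t x ↦ ‖x + t • g x‖ ^ 2) = (fun _ x ↦ ‖x‖ ^ 2) +
      (fun t _ ↦ t) * (fun _ x ↦ 2 * inner ℝ x (g x)) + (fun t _ ↦ t) ^ 2 *
        (fun _ x ↦ ‖g x‖ ^ 2) := by
    ext t x
    simp only [norm_add_sq_real, norm_smul, inner_smul_right, mul_pow, Real.norm_eq_abs, sq_abs,
      Pi.add_apply, Pi.mul_apply, Pi.pow_apply]
    ring
  rw [expand]
  exact add_mem (add_mem (const_mem_polynomialFamilies (by fun_prop))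
    (mul_mem parameter_mem_polynomialFamilies (const_mem_polynomialFamilies (by fun_prop))))
    (mul_mem (pow_mem parameter_mem_polynomialFamilies 2)
      (const_mem_polynomialFamilies (by fun_prop)))

lemma det_one_add_smul_mem_polynomialFamilies {E F : Type*} [TopologicalSpace E]
    [NormedAddCommGroup F] [NormedSpace ℝ F] [FiniteDimensional ℝ F] {A : E → F →L[ℝ] F}
    (hA : Continuous A) : (fun t x ↦ (1 + t • A x).det) ∈ polynomialFamilies E := by
  let b := finBasis ℝ F
  let entry (i j : Fin (finrank ℝ F)) : ℝ → E → ℝ := (fun _ _ ↦ (1 : Matrix _ _ ℝ) i j) +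
    (fun t _ ↦ t) * fun _ x ↦ b.coord i (A x (b j))
  have entry_mem (i j) : entry i j ∈ polynomialFamilies E :=
    add_mem (const_mem_polynomialFamilies continuous_const) <|
      mul_mem parameter_mem_polynomialFamilies <| const_mem_polynomialFamilies <|
        (LinearMap.continuous_of_finiteDimensional (b.coord i)).comp (hA.clm_apply continuous_const)
  have expand : (fun t x ↦ (1 + t • A x).det) =
      ∑ σ : Equiv.Perm (Fin (finrank ℝ F)), (σ.sign : ℤ) • ∏ i, entry (σ i) i := by
    ext t x
    rw [ContinuousLinearMap.det, ← LinearMap.det_toMatrix b, Matrix.det_apply]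
    simp [entry, LinearMap.toMatrix_apply, Matrix.one_apply, Units.smul_def,
      Finsupp.single_apply, eq_comm]
  rw [expand]
  exact sum_mem fun σ _ ↦ zsmul_mem (prod_mem fun i _ ↦ entry_mem _ _) _

variable {E : Type*} [TopologicalSpace E] [T2Space E] [MeasurableSpace E] [OpensMeasurableSpace E]
  {μ : Measure E} [IsFiniteMeasureOnCompacts μ]

lemma exists_polynomial_eval_eq_setIntegral {f : ℝ → E → ℝ} (hf : f ∈ polynomialFamilies E)
    {K : Set E} (hK : IsCompact K) :
    ∃ Q : Polynomial ℝ, ∀ t, Q.eval t = ∫ x in K, f t x ∂μ := by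
  obtain ⟨P, hP⟩ := mem_polynomialFamilies_iff.1 hf
  refine ⟨∑ i ∈ Finset.range (P.natDegree + 1),
    Polynomial.monomial i (∫ x in K, P.coeff i x ∂μ), fun t ↦ ?_⟩
  simp only [← hP, P.eval_eq_sum_range, ContinuousMap.coe_sum, Finset.sum_apply]
  rw [integral_finsetSum, Polynomial.eval_finsetSum]
  · simp [integral_mul_const]
  · exact fun i _ ↦ (ContinuousMap.continuous _).continuousOn.integrableOn_compact hK

lemma setIntegral_eq_of_eventually_nhds_zero {f : ℝ → E → ℝ} (hf : f ∈ polynomialFamilies E)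
    {K : Set E} (hK : IsCompact K) {c : ℝ} (hc : ∀ᶠ t in 𝓝 0, ∫ x in K, f t x ∂μ = c) (t : ℝ) :
    ∫ x in K, f t x ∂μ = c := by
  obtain ⟨Q, hQ⟩ := exists_polynomial_eval_eq_setIntegral (μ := μ) hf hK
  have Q_eq : Q = Polynomial.C c := Polynomial.eq_of_infinite_eval_eq _ _ <|
    infinite_of_mem_nhds 0 <| hc.mono fun t ht ↦ by simp [hQ, ht]
  rw [← hQ, Q_eq, Polynomial.eval_C]

end PolynomialFamilies

section Brouwer

open MeasureTheory Set Filter Topology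

lemma bijective_add_of_lipschitzWith {E : Type*} [NormedAddCommGroup E] [NormedSpace ℝ E]
    [CompleteSpace E] {g : E → E} {c : NNReal} (hg : LipschitzWith c g) (hc : c < 1) :
    Function.Bijective fun x ↦ x + g x := by
  have approx : ApproximatesLinearOn (fun x ↦ x + g x)
      (ContinuousLinearEquiv.refl ℝ E : E →L[ℝ] E) univ c :=
    fun x _ y _ ↦ by simpa [add_sub_add_comm] using hg.norm_sub_le x y
  refine (approx.toHomeomorph _ ?_).bijective
  rcases subsingleton_or_nontrivial E with hE | hE
  · exact .inl hE
  · exact .inr (by simpa using hc)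

lemma image_add_eq_self {E : Type*} [AddGroup E] {g : E → E}
    (hbij : Function.Bijective fun x ↦ x + g x) {K : Set E} (hK : ∀ x ∉ K, g x = 0) :
    (fun x ↦ x + g x) '' K = K := by
  have image_compl : (fun x ↦ x + g x) '' Kᶜ = Kᶜ :=
    EqOn.image_eq_self fun x hx ↦ by simp [hK x hx]
  rw [← compl_inj_iff, ← image_compl_eq hbij, image_compl]

lemma abs_setIntegral_mul_sub_le {Y : Type*} [TopologicalSpace Y] [T2Space Y] [MeasurableSpace Y]
    [OpensMeasurableSpace Y] {μ : Measure Y} [IsFiniteMeasureOnCompacts μ] {K : Set Y}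
    (hK : IsCompact K) {f₁ f₂ w : Y → ℝ} (hf₁ : Continuous f₁) (hf₂ : Continuous f₂)
    (hw : Continuous w) {δ : ℝ} (hδ : ∀ x ∈ K, |f₁ x - f₂ x| ≤ δ) :
    |∫ x in K, f₁ x * w x ∂μ - ∫ x in K, f₂ x * w x ∂μ| ≤ δ * ∫ x in K, |w x| ∂μ := by
  have integrable {f : Y → ℝ} (hf : Continuous f) : IntegrableOn f K μ :=
    hf.continuousOn.integrableOn_compact hK
  rw [← integral_sub (integrable (hf₁.fun_mul hw)) (integrable (hf₂.fun_mul hw)),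
    ← integral_const_mul, ← Real.norm_eq_abs]
  refine norm_integral_le_of_norm_le ((integrable hw.abs).const_mul δ) <|
    (ae_restrict_mem hK.measurableSet).mono fun x hx ↦ ?_
  rw [← sub_mul, norm_mul]
  exact mul_le_mul_of_nonneg_right (hδ x hx) (abs_nonneg _)

variable {E : Type*} [NormedAddCommGroup E]

section ChangeOfVariables

variable [NormedSpace ℝ E]

lemma eventually_forall_det_one_add_smul_pos {Y : Type*} [TopologicalSpace Y]
    {A : Y → E →L[ℝ] E} (hA : Continuous A) {K : Set Y} (hK : IsCompact K) :
    ∀ᶠ t : ℝ in 𝓝 0, ∀ x ∈ K, 0 < (1 + t • A x).det := by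
  refine hK.eventually_forall_of_forall_eventually fun x _ ↦ ?_
  have hcont : Continuous fun z : ℝ × Y ↦ (1 + z.1 • A z.2).det :=
    ContinuousLinearMap.continuous_det.comp (by fun_prop)
  exact hcont.continuousAt.eventually_const_lt (by simp [ContinuousLinearMap.det])

variable [FiniteDimensional ℝ E] [MeasurableSpace E] [BorelSpace E] {μ : Measure E}
  [μ.IsAddHaarMeasure]

lemma eventually_setIntegral_comp_add_smul_mul_det {g : E → E} (hg : ContDiff ℝ 1 g)
    {K : Set E} (hK : IsCompact K) (hgK : ∀ x ∉ K, g x = 0) (φ : E → ℝ) :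
    ∀ᶠ t : ℝ in 𝓝 0,
      ∫ x in K, φ (x + t • g x) * (1 + t • fderiv ℝ g x).det ∂μ = ∫ x in K, φ x ∂μ := by
  obtain ⟨C, hC⟩ :=
    hg.lipschitzWith_of_hasCompactSupport (HasCompactSupport.intro hK hgK) one_ne_zero
  have eventually_contracting : ∀ᶠ t : ℝ in 𝓝 0, ‖t‖₊ * C < 1 :=
    (Continuous.continuousAt (by fun_prop)).eventually_lt_const (by simp)
  filter_upwards [eventually_forall_det_one_add_smul_pos (hg.continuous_fderiv one_ne_zero) hK,
    eventually_contracting] with t det_pos contracting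
  have hbij : Function.Bijective fun x ↦ x + t • g x :=
    bijective_add_of_lipschitzWith ((lipschitzWith_smul t).comp hC) contracting
  have hderiv (x : E) : HasFDerivAt (fun x ↦ x + t • g x) (1 + t • fderiv ℝ g x) x :=
    (hasFDerivAt_id x).add ((hg.differentiable one_ne_zero x).hasFDerivAt.const_smul t)
  have himage : (fun x ↦ x + t • g x) '' K = K :=
    image_add_eq_self hbij fun x hx ↦ by simp [hgK x hx]
  conv_rhs => rw [← himage]
  rw [integral_image_eq_integral_abs_det_fderiv_smul μ hK.measurableSet
    (fun x _ ↦ (hderiv x).hasFDerivWithinAt) hbij.injective.injOn]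
  refine setIntegral_congr_fun hK.measurableSet fun x hx ↦ ?_
  simp only [abs_of_pos (det_pos x hx), smul_eq_mul, mul_comm]

end ChangeOfVariables

section SmoothCase

variable [InnerProductSpace ℝ E] [FiniteDimensional ℝ E] [MeasurableSpace E] [BorelSpace E]
  {μ : Measure E} [μ.IsAddHaarMeasure] {g : E → E} {K : Set E}

-- Both sides are the values at `1` and near `0` of the polynomial
-- `t ↦ ∫ x in K, p (‖x + t • g x‖ ^ 2) * det (1 + t • g' x)`.
lemma setIntegral_eval_norm_sq_eq (hg : ContDiff ℝ 1 g) (hK : IsCompact K)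
    (hgK : ∀ x ∉ K, g x = 0) (p : Polynomial ℝ) :
    ∫ x in K, p.eval (‖x + g x‖ ^ 2) * (1 + fderiv ℝ g x).det ∂μ =
      ∫ x in K, p.eval (‖x‖ ^ 2) ∂μ := by
  have hmem := mul_mem
    (eval_mem_polynomialFamilies p (norm_add_smul_sq_mem_polynomialFamilies hg.continuous))
    (det_one_add_smul_mem_polynomialFamilies (hg.continuous_fderiv one_ne_zero))
  simpa using setIntegral_eq_of_eventually_nhds_zero hmem hK
    (eventually_setIntegral_comp_add_smul_mul_det hg hK hgK fun x ↦ p.eval (‖x‖ ^ 2)) 1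

lemma setIntegral_comp_norm_sq_eq (hg : ContDiff ℝ 1 g) (hK : IsCompact K)
    (hgK : ∀ x ∉ K, g x = 0) {φ : ℝ → ℝ} (hφ : Continuous φ) :
    ∫ x in K, φ (‖x + g x‖ ^ 2) * (1 + fderiv ℝ g x).det ∂μ = ∫ x in K, φ (‖x‖ ^ 2) ∂μ := by
  have hg_cont := hg.continuous
  have hdet : Continuous fun x ↦ (1 + fderiv ℝ g x).det :=
    ContinuousLinearMap.continuous_det.comp
      (continuous_const.add (hg.continuous_fderiv one_ne_zero))
  obtain ⟨b, hb⟩ := (hK.image (f := fun x ↦ max (‖x + g x‖ ^ 2) (‖x‖ ^ 2)) (by fun_prop)).bddAbove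
  have mem_Icc {x : E} (hx : x ∈ K) : ‖x + g x‖ ^ 2 ∈ Icc 0 b ∧ ‖x‖ ^ 2 ∈ Icc 0 b := by
    have := max_le_iff.1 (hb (mem_image_of_mem _ hx))
    exact ⟨⟨sq_nonneg _, this.1⟩, ⟨sq_nonneg _, this.2⟩⟩
  set W := (∫ x in K, |(1 + fderiv ℝ g x).det| ∂μ) + ∫ _ in K, |(1 : ℝ)| ∂μ
  have W_add_one_pos : 0 < W + 1 := add_pos_of_nonneg_of_pos (add_nonneg
    (integral_nonneg fun _ ↦ abs_nonneg _) (integral_nonneg fun _ ↦ abs_nonneg _)) one_pos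
  refine eq_of_forall_dist_le fun ε hε ↦ ?_
  obtain ⟨p, hp⟩ := exists_polynomial_near_of_continuousOn 0 b φ hφ.continuousOn (ε / (W + 1))
    (div_pos hε W_add_one_pos)
  have hleft := abs_setIntegral_mul_sub_le (μ := μ) hK (f₁ := fun x ↦ p.eval (‖x + g x‖ ^ 2))
    (f₂ := fun x ↦ φ (‖x + g x‖ ^ 2)) (by fun_prop) (by fun_prop) hdet
    fun x hx ↦ (hp _ (mem_Icc hx).1).le
  have hright := abs_setIntegral_mul_sub_le (μ := μ) hK (f₁ := fun x ↦ p.eval (‖x‖ ^ 2))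
    (f₂ := fun x ↦ φ (‖x‖ ^ 2)) (by fun_prop) (by fun_prop) (continuous_const (y := (1 : ℝ)))
    fun x hx ↦ (hp _ (mem_Icc hx).2).le
  rw [setIntegral_eval_norm_sq_eq hg hK hgK, abs_sub_comm] at hleft
  simp only [mul_one] at hright
  calc _ ≤ _ := dist_triangle _ _ _
    _ ≤ ε / (W + 1) * W := (add_le_add hleft hright).trans_eq (mul_add _ _ _).symm
    _ ≤ ε / (W + 1) * (W + 1) := by gcongr; exact le_add_of_nonneg_right zero_le_one
    _ = ε := div_mul_cancel₀ _ W_add_one_pos.ne'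

end SmoothCase

lemma exists_add_eq_zero_of_contDiff [InnerProductSpace ℝ E] [FiniteDimensional ℝ E] {g : E → E}
    (hg : ContDiff ℝ 1 g) (hsupp : HasCompactSupport g) : ∃ x, x + g x = 0 := by
  borelize E
  by_contra! hne
  have hg_cont := hg.continuous
  have hne_zero : g 0 ≠ 0 := by simpa using hne 0
  obtain ⟨x₀, -, hmin⟩ := hsupp.isCompact.exists_isMinOn ⟨0, subset_tsupport g hne_zero⟩
    (f := fun x ↦ ‖x + g x‖ ^ 2) (by fun_prop)
  set φ : ℝ → ℝ := fun s ↦ max 0 (‖x₀ + g x₀‖ ^ 2 - s)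
  have hφ : Continuous φ := by fun_prop
  have hφ_nonneg (s : ℝ) : 0 ≤ φ s := le_max_left _ _
  have hφ_norm : Continuous fun x : E ↦ φ (‖x‖ ^ 2) := by fun_prop
  have pos_side : 0 < ∫ x in tsupport g, φ (‖x‖ ^ 2) := by
    rw [setIntegral_pos_iff_support_of_nonneg_ae (.of_forall fun x ↦ hφ_nonneg (‖x‖ ^ 2))
      (hφ_norm.continuousOn.integrableOn_compact hsupp.isCompact)]
    have hopen := hφ_norm.isOpen_support.inter hg_cont.isOpen_support
    refine (hopen.measure_pos volume ⟨0, ?_, hne_zero⟩).trans_le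
      (measure_mono (inter_subset_inter_right _ (subset_tsupport g)))
    simp [φ, hne x₀]
  have zero_side : ∫ x in tsupport g, φ (‖x + g x‖ ^ 2) * (1 + fderiv ℝ g x).det = 0 :=
    setIntegral_eq_zero_of_forall_eq_zero fun x hx ↦ by
      simp [φ, isMinOn_iff.1 hmin x hx]
  rw [setIntegral_comp_norm_sq_eq hg hsupp.isCompact (fun _ ↦ image_eq_zero_of_notMem_tsupport) hφ]
    at zero_side
  exact pos_side.ne' zero_side

lemma exists_add_eq_zero_of_hasCompactSupport [InnerProductSpace ℝ E] [FiniteDimensional ℝ E]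
    {g : E → E} (hg : Continuous g) (hsupp : HasCompactSupport g) : ∃ x, x + g x = 0 := by
  by_contra! hne
  obtain ⟨h, h_smooth, h_near, h_supp⟩ := hg.exists_contDiff_approx 1
    (ε := fun x ↦ ‖x + g x‖) (by fun_prop) fun x ↦ norm_pos_iff.2 (hne x)
  obtain ⟨x, hx⟩ := exists_add_eq_zero_of_contDiff (by exact_mod_cast h_smooth) (hsupp.mono h_supp)
  refine (h_near x).ne ?_
  rw [eq_neg_of_add_eq_zero_right hx, dist_eq_norm, ← norm_neg, neg_sub, sub_neg_eq_add, add_comm]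

lemma exists_isFixedPt_of_isBounded_range_of_innerProductSpace [InnerProductSpace ℝ E]
    [FiniteDimensional ℝ E] {f : E → E} (hf : Continuous f)
    (hbdd : Bornology.IsBounded (range f)) : ∃ x, Function.IsFixedPt f x := by
  obtain ⟨C, C_pos, hC⟩ := hbdd.exists_pos_norm_le
  let χ : ContDiffBump (0 : E) := ⟨C, C + 1, C_pos, lt_add_one C⟩
  obtain ⟨x, hx⟩ := exists_add_eq_zero_of_hasCompactSupport (g := fun x ↦ -(χ x • f x))
    (χ.continuous.smul hf).neg χ.hasCompactSupport.smul_right.neg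
  rw [← sub_eq_add_neg, sub_eq_zero] at hx
  have norm_le : ‖x‖ ≤ C := by
    rw [hx, norm_smul, Real.norm_of_nonneg χ.nonneg]
    exact (mul_le_of_le_one_left (norm_nonneg _) χ.le_one).trans (hC _ (mem_range_self x))
  have χ_eq_one : χ x = 1 := χ.one_of_mem_closedBall (mem_closedBall_zero_iff.2 norm_le)
  refine ⟨x, ?_⟩
  rw [χ_eq_one, one_smul] at hx
  exact hx.symm

theorem exists_isFixedPt_of_isBounded_range [NormedSpace ℝ E] [FiniteDimensional ℝ E] {f : E → E}
    (hf : Continuous f) (hbdd : Bornology.IsBounded (range f)) :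
    ∃ x, Function.IsFixedPt f x := by
  let e : E ≃L[ℝ] EuclideanSpace ℝ (Fin (finrank ℝ E)) := toEuclidean
  obtain ⟨y, hy⟩ := exists_isFixedPt_of_isBounded_range_of_innerProductSpace (f := e ∘ f ∘ e.symm)
    (by fun_prop) (((e : E →L[ℝ] _).lipschitz.isBounded_image hbdd).subset (by
      rw [range_comp]; exact image_mono (range_comp_subset_range _ _)))
  exact ⟨e.symm y, e.injective (hy.trans (e.apply_symm_apply y).symm)⟩

-- A fixed point of the clamped map `x ↦ P x - f (P x)` must lie in the box.
theorem exists_eq_zero_of_poincare_miranda {ι : Type*} [Finite ι] {a b : ι → ℝ} (hab : a ≤ b)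
    {f : (ι → ℝ) → ι → ℝ} (hf : ContinuousOn f (Icc a b))
    (hle : ∀ x ∈ Icc a b, ∀ i, x i = a i → f x i ≤ 0)
    (hge : ∀ x ∈ Icc a b, ∀ i, x i = b i → 0 ≤ f x i) : ∃ x ∈ Icc a b, f x = 0 := by
  have := Fintype.ofFinite ι
  let P (x : ι → ℝ) : ι → ℝ := a ⊔ (b ⊓ x)
  have P_mem (x) : P x ∈ Icc a b := ⟨le_sup_left, sup_le hab inf_le_left⟩
  have P_cont : Continuous P := continuous_pi fun i ↦
    continuous_const.sup (continuous_const.inf (continuous_apply i))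
  have hu : ContinuousOn (fun y ↦ y - f y) (Icc a b) := continuousOn_id.sub hf
  obtain ⟨x, hx⟩ := exists_isFixedPt_of_isBounded_range (f := fun x ↦ P x - f (P x))
    (hu.comp_continuous P_cont P_mem) ((isCompact_Icc.image_of_continuousOn hu).isBounded.subset <|
      range_subset_iff.2 fun x ↦ mem_image_of_mem _ (P_mem x))
  have hx_apply (i : ι) : P x i - f (P x) i = x i := congrFun hx i
  have P_apply (i : ι) : P x i = max (a i) (min (b i) (x i)) := rfl
  have P_eq : P x = x := by
    ext i
    rcases lt_or_ge (x i) (a i) with hlt | hax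
    · have := hle _ (P_mem x) i (by simp [P_apply, hlt.le])
      have := hx_apply i
      have := (P_mem x).1 i
      linarith
    rcases lt_or_ge (b i) (x i) with hlt | hxb
    · have := hge _ (P_mem x) i (by simp [P_apply, hlt.le, hab i])
      have := hx_apply i
      have := (P_mem x).2 i
      linarith
    · rw [P_apply, min_eq_right hxb, max_eq_right hax]
  refine ⟨P x, P_mem x, funext fun i ↦ ?_⟩
  have := hx_apply i
  rw [P_eq] at this ⊢
  simpa using this

end Brouwer

section EquilateralPerturbation

/-- The `i`-th row of the lower unitriangular matrix whose entry at `(i, l)`, for `l < i`, is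
`θ (l, i)`; the other values of `θ` are ignored. -/
def unitriangularRow {ι : Type*} [LinearOrder ι] (θ : ι × ι → ℝ) (i l : ι) : ℝ :=
  (if l = i then 1 else 0) + if l < i then θ (l, i) else 0

lemma abs_unitriangularRow_sub_le {ι : Type*} [LinearOrder ι] {θ : ι × ι → ℝ} {δ : ℝ}
    (hθ : ∀ p, |θ p| ≤ δ) {i j l : ι} (hli : l ≠ i) (hlj : l ≠ j) :
    |unitriangularRow θ i l - unitriangularRow θ j l| ≤ 2 * δ := by
  have abs_le {m : ι} (hlm : l ≠ m) : |unitriangularRow θ m l| ≤ δ := by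
    rw [unitriangularRow, if_neg hlm, zero_add]
    split_ifs
    · exact hθ _
    · exact abs_zero.trans_le ((abs_nonneg _).trans (hθ (l, m)))
  linarith [abs_sub (unitriangularRow θ i l) (unitriangularRow θ j l), abs_le hli, abs_le hlj]

variable {ι : Type*} [Fintype ι] {X : Type*} [NormedAddCommGroup X] [NormedSpace ℝ X]

lemma exists_norm_sum_smul_le_of_mem_convexHull (v : ι → X) {t : ι → Set ℝ} {a : ι → ℝ}
    (ha : ∀ l, a l ∈ convexHull ℝ (t l)) :
    ∃ b : ι → ℝ, (∀ l, b l ∈ t l) ∧ ‖∑ l, a l • v l‖ ≤ ‖∑ l, b l • v l‖ := by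
  have hconv : ConvexOn ℝ Set.univ fun b : ι → ℝ ↦ ‖∑ l, b l • v l‖ :=
    (convexOn_univ_norm (E := X)).comp_linearMap (Fintype.linearCombination ℝ v)
  have hmem : a ∈ convexHull ℝ (Set.univ.pi t) := by
    rw [convexHull_pi]
    exact fun l _ ↦ ha l
  obtain ⟨b, hb, hle⟩ := hconv.exists_ge_of_mem_convexHull (Set.subset_univ _) hmem
  exact ⟨b, fun l ↦ hb l trivial, hle⟩

lemma NearlyEuclideanOn.norm_sum_smul_le {v : ι → X} {s : Finset ℝ} {M η : ℝ}
    (hv : NearlyEuclideanOn v s M η) (hM : 0 ≤ M) (hη : 0 ≤ η) {t : ι → Set ℝ} {r a : ι → ℝ}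
    (hts : ∀ l, t l ⊆ s) (htr : ∀ l, ∀ b ∈ t l, b ^ 2 ≤ r l)
    (ha : ∀ l, a l ∈ convexHull ℝ (t l)) :
    ‖∑ l, a l • v l‖ ≤ (1 + η) * M * √(∑ l, r l) := by
  obtain ⟨b, hb, hab⟩ := exists_norm_sum_smul_le_of_mem_convexHull v ha
  have hsqrt : √(∑ l, b l ^ 2) ≤ √(∑ l, r l) :=
    Real.sqrt_le_sqrt (Finset.sum_le_sum fun l _ ↦ htr l _ (hb l))
  have hnear := (abs_le.1 (hv b fun l ↦ hts l (hb l))).2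
  calc ‖∑ l, a l • v l‖ ≤ ‖∑ l, b l • v l‖ := hab
    _ ≤ (1 + η) * M * √(∑ l, b l ^ 2) := by linarith
    _ ≤ (1 + η) * M * √(∑ l, r l) := by gcongr

/-- The vertex values of the coefficients of `v l` in differences of the vectors `perturbation v θ`
when `θ` ranges over the cube `[-δ, δ]`, together with the value `0`. -/
noncomputable def perturbationCoeffs (δ : ℝ) : Finset ℝ := {-1, 1 - δ, 1 + δ, -(2 * δ), 0, 2 * δ}

section Face

variable {v : ι → X} {M η δ c : ℝ} {i j : ι} {a : ι → ℝ}

lemma norm_sum_smul_le_of_mem_face (hv : NearlyEuclideanOn v (perturbationCoeffs δ) M η)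
    (hM : 0 ≤ M) (hη : 0 ≤ η) (hδ : 0 ≤ δ) (hc : c ∈ perturbationCoeffs δ) (hij : i ≠ j)
    (hai : a i = c) (haj : a j = -1) (ha : ∀ l, l ≠ i → l ≠ j → |a l| ≤ 2 * δ) :
    ‖∑ l, a l • v l‖ ≤ (1 + η) * M * √(1 + c ^ 2 + 4 * Fintype.card ι * δ ^ 2) := by
  classical
  let t (l : ι) : Set ℝ := if l = i then {c} else if l = j then {-1} else {-(2 * δ), 2 * δ}
  let r (l : ι) : ℝ := (if l = j then 1 else 0) + (if l = i then c ^ 2 else 0) + 4 * δ ^ 2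
  have sum_r : ∑ l, r l = 1 + c ^ 2 + 4 * Fintype.card ι * δ ^ 2 := by
    simp [r, Finset.sum_add_distrib]
    ring
  rw [← sum_r]
  have t_left : t i = {c} := by simp [t]
  have t_right : t j = {-1} := by simp [t, hij.symm]
  have t_other {l : ι} (hli : l ≠ i) (hlj : l ≠ j) : t l = {-(2 * δ), 2 * δ} := by
    simp [t, hli, hlj]
  have cases_index (l : ι) : l = i ∨ l = j ∨ l ≠ i ∧ l ≠ j := by tauto
  refine hv.norm_sum_smul_le hM hη (t := t) (fun l ↦ ?_) (fun l b hb ↦ ?_) fun l ↦ ?_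
  · rcases cases_index l with rfl | rfl | ⟨hli, hlj⟩
    · simpa [t_left] using hc
    · simp [t_right, perturbationCoeffs]
    · simp [t_other hli hlj, perturbationCoeffs, Set.insert_subset_iff]
  · rcases cases_index l with rfl | rfl | ⟨hli, hlj⟩
    · obtain rfl : b = c := by simpa [t_left] using hb
      simp only [r, hij, if_false, if_true]
      linarith [sq_nonneg δ]
    · obtain rfl : b = -1 := by simpa [t_right] using hb
      simp only [r, hij.symm, if_false, if_true]
      linarith [sq_nonneg δ]
    · obtain rfl | rfl : b = -(2 * δ) ∨ b = 2 * δ := by simpa [t_other hli hlj] using hb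
      all_goals simp only [r, hli, hlj, if_false]; linarith
  · rcases cases_index l with rfl | rfl | ⟨hli, hlj⟩
    · simp [t_left, hai]
    · simp [t_right, haj]
    · rw [t_other hli hlj, convexHull_pair, segment_eq_Icc (by linarith)]
      exact abs_le.1 (ha l hli hlj)

-- Reflect `a` in the vector with entries `c` at `i` and `-1` at `j`, and apply the upper bound.
lemma le_norm_sum_smul_of_mem_face (hv : NearlyEuclideanOn v (perturbationCoeffs δ) M η)
    (hM : 0 ≤ M) (hη : 0 ≤ η) (hδ : 0 ≤ δ) (hc : c ∈ perturbationCoeffs δ) (hij : i ≠ j)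
    (hai : a i = c) (haj : a j = -1) (ha : ∀ l, l ≠ i → l ≠ j → |a l| ≤ 2 * δ) :
    2 * ((1 - η) * M * √(1 + c ^ 2)) -
      (1 + η) * M * √(1 + c ^ 2 + 4 * Fintype.card ι * δ ^ 2) ≤ ‖∑ l, a l • v l‖ := by
  classical
  let e (l : ι) : ℝ := if l = i then c else if l = j then -1 else 0
  have sum_sq : ∑ l, e l ^ 2 = 1 + c ^ 2 := by
    have e_sq (l : ι) : e l ^ 2 = (if l = j then 1 else 0) + if l = i then c ^ 2 else 0 := by
      by_cases hli : l = i <;> by_cases hlj : l = j <;> simp_all [e]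
    simp [e_sq, Finset.sum_add_distrib]
  have e_mem (l : ι) : e l ∈ perturbationCoeffs δ := by
    simp only [e]
    split_ifs
    · exact hc
    all_goals simp [perturbationCoeffs]
  have center_lower := (abs_le.1 (hv e e_mem)).1
  rw [sum_sq] at center_lower
  have reflected_upper := norm_sum_smul_le_of_mem_face (a := fun l ↦ 2 * e l - a l) hv hM hη hδ hc
    hij (by simp [e, hai]; ring) (by simp [e, haj, hij.symm]; norm_num)
    fun l hli hlj ↦ by simpa [e, hli, hlj] using ha l hli hlj
  have reflected_eq : ∑ l, (2 * e l - a l) • v l = (2 : ℝ) • ∑ l, e l • v l - ∑ l, a l • v l := by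
    simp only [Finset.smul_sum, ← Finset.sum_sub_distrib, sub_smul, mul_smul]
  have triangle := norm_sub_norm_le ((2 : ℝ) • ∑ l, e l • v l) (∑ l, a l • v l)
  rw [norm_smul, Real.norm_ofNat, ← reflected_eq] at triangle
  linarith

lemma one_add_mul_sqrt_le_sqrt_two {κ : ℝ} (hδ : 0 < δ) (hδ_le : δ ≤ 1 / 100) (hκ : 0 ≤ κ)
    (hκ_le : κ ≤ δ / 25) : (1 + δ / 100) * √(1 + (1 - δ) ^ 2 + κ) ≤ √2 := by
  refine Real.le_sqrt_of_sq_le ?_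
  rw [mul_pow, Real.sq_sqrt (by positivity)]
  nlinarith [mul_nonneg hδ.le hδ.le, mul_nonneg hδ.le hκ, mul_pos (mul_pos hδ hδ) hδ]

lemma sqrt_two_le_two_mul_sub {κ : ℝ} (hδ : 0 < δ) (hδ_le : δ ≤ 1 / 100) (hκ_le : κ ≤ δ / 25) :
    √2 ≤ 2 * ((1 - δ / 100) * √(1 + (1 + δ) ^ 2)) -
      (1 + δ / 100) * √(1 + (1 + δ) ^ 2 + κ) := by
  have sq_sqrt_two : √2 ^ 2 = 2 := Real.sq_sqrt zero_le_two
  have one_le_sqrt_two : 1 ≤ √2 := by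
    rw [Real.one_le_sqrt]
    norm_num
  have sqrt_two_le : √2 ≤ 3 / 2 := by
    rw [Real.sqrt_le_left (by norm_num)]
    norm_num
  set s := √(1 + (1 + δ) ^ 2)
  have sq_s : s ^ 2 = 1 + (1 + δ) ^ 2 := Real.sq_sqrt (by positivity)
  have le_s : √2 + 3 / 5 * δ ≤ s := Real.le_sqrt_of_sq_le (by nlinarith)
  have s_le : s ≤ 2 := by
    rw [Real.sqrt_le_left (by norm_num)]
    nlinarith
  have sqrt_add_le : √(1 + (1 + δ) ^ 2 + κ) ≤ s + δ / 50 := by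
    rw [Real.sqrt_le_left (by positivity)]
    nlinarith
  nlinarith [Real.sqrt_nonneg (1 + (1 + δ) ^ 2)]

end Face

/-- The family obtained from `v` by adding to each `v i` the combination of the preceding vectors
`v l` with coefficients `θ (l, i)`. -/
def perturbation [LinearOrder ι] (v : ι → X) (θ : ι × ι → ℝ) (i : ι) : X :=
  ∑ l, unitriangularRow θ i l • v l

variable [LinearOrder ι]

lemma continuous_perturbation (v : ι → X) (i : ι) : Continuous fun θ ↦ perturbation v θ i := by
  unfold perturbation unitriangularRow
  refine continuous_finsetSum _ fun l _ ↦ .smul (continuous_const.add ?_) continuous_const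
  split_ifs <;> fun_prop

lemma perturbation_sub (v : ι → X) (θ : ι × ι → ℝ) (i j : ι) :
    perturbation v θ i - perturbation v θ j =
      ∑ l, (unitriangularRow θ i l - unitriangularRow θ j l) • v l := by
  simp only [perturbation, sub_smul, Finset.sum_sub_distrib]

section PerturbationFace

variable {v : ι → X} {M δ : ℝ} {θ : ι × ι → ℝ} {i j : ι}

lemma norm_perturbation_sub_le (hv : NearlyEuclideanOn v (perturbationCoeffs δ) M (δ / 100))
    (hM : 0 ≤ M) (hδ : 0 < δ) (hcard : Fintype.card ι * δ ≤ 1 / 100) (hθ : ∀ p, |θ p| ≤ δ)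
    (hij : i < j) (hθij : θ (i, j) = δ) :
    ‖perturbation v θ i - perturbation v θ j‖ ≤ M * √2 := by
  have one_le_card : (1 : ℝ) ≤ Fintype.card ι := mod_cast Fintype.card_pos_iff.2 ⟨i⟩
  have hface := norm_sum_smul_le_of_mem_face (c := 1 - δ)
    (a := fun l ↦ unitriangularRow θ i l - unitriangularRow θ j l) hv hM (by positivity) hδ.le
    (by simp [perturbationCoeffs]) hij.ne (by simp [unitriangularRow, hij, hij.ne, hθij])
    (by simp [unitriangularRow, hij.not_gt, hij.ne'])
    fun _ hli hlj ↦ abs_unitriangularRow_sub_le hθ hli hlj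
  have hnum : (1 + δ / 100) * √(1 + (1 - δ) ^ 2 + 4 * Fintype.card ι * δ ^ 2) ≤ √2 :=
    one_add_mul_sqrt_le_sqrt_two hδ (by nlinarith) (by positivity) (by nlinarith)
  rw [perturbation_sub]
  linarith [mul_le_mul_of_nonneg_left hnum hM]

lemma le_norm_perturbation_sub (hv : NearlyEuclideanOn v (perturbationCoeffs δ) M (δ / 100))
    (hM : 0 ≤ M) (hδ : 0 < δ) (hcard : Fintype.card ι * δ ≤ 1 / 100) (hθ : ∀ p, |θ p| ≤ δ)
    (hij : i < j) (hθij : θ (i, j) = -δ) :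
    M * √2 ≤ ‖perturbation v θ i - perturbation v θ j‖ := by
  have one_le_card : (1 : ℝ) ≤ Fintype.card ι := mod_cast Fintype.card_pos_iff.2 ⟨i⟩
  have hface := le_norm_sum_smul_of_mem_face (c := 1 + δ)
    (a := fun l ↦ unitriangularRow θ i l - unitriangularRow θ j l) hv hM (by positivity) hδ.le
    (by simp [perturbationCoeffs]) hij.ne (by simp [unitriangularRow, hij, hij.ne, hθij])
    (by simp [unitriangularRow, hij.not_gt, hij.ne'])
    fun _ hli hlj ↦ abs_unitriangularRow_sub_le hθ hli hlj
  have hnum : √2 ≤ 2 * ((1 - δ / 100) * √(1 + (1 + δ) ^ 2)) -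
      (1 + δ / 100) * √(1 + (1 + δ) ^ 2 + 4 * Fintype.card ι * δ ^ 2) :=
    sqrt_two_le_two_mul_sub hδ (by nlinarith) (by nlinarith)
  rw [perturbation_sub]
  linarith [mul_le_mul_of_nonneg_left hnum hM]

end PerturbationFace

theorem NearlyEuclideanOn.exists_pairwise_norm_sub_eq {v : ι → X} {M δ : ℝ}
    (hv : NearlyEuclideanOn v (perturbationCoeffs δ) M (δ / 100)) (hM : 0 ≤ M) (hδ : 0 < δ)
    (hcard : Fintype.card ι * δ ≤ 1 / 100) :
    ∃ x : ι → X, Pairwise fun i j ↦ ‖x i - x j‖ = M * √2 := by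
  let excess (θ : ι × ι → ℝ) (p : ι × ι) : ℝ :=
    if p.1 < p.2 then M * √2 - ‖perturbation v θ p.1 - perturbation v θ p.2‖ else 0
  have excess_cont : Continuous excess := continuous_pi fun p ↦ by
    have := continuous_perturbation v p.1
    have := continuous_perturbation v p.2
    simp only [excess]
    split_ifs <;> fun_prop
  have abs_le_of_mem {θ : ι × ι → ℝ} (hθ : θ ∈ Set.Icc (fun _ ↦ -δ) fun _ ↦ δ) (p : ι × ι) :
      |θ p| ≤ δ := abs_le.2 ⟨hθ.1 p, hθ.2 p⟩
  obtain ⟨θ, -, hzero⟩ := exists_eq_zero_of_poincare_miranda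
    (fun _ ↦ neg_le_self hδ.le) excess_cont.continuousOn
    (fun θ hθ p hp ↦ by
      simp only [excess]
      split_ifs with hlt
      · exact sub_nonpos.2 (le_norm_perturbation_sub hv hM hδ hcard (abs_le_of_mem hθ) hlt hp)
      · exact le_rfl)
    (fun θ hθ p hp ↦ by
      simp only [excess]
      split_ifs with hlt
      · exact sub_nonneg.2 (norm_perturbation_sub_le hv hM hδ hcard (abs_le_of_mem hθ) hlt hp)
      · exact le_rfl)
  have norm_eq_of_lt {i j : ι} (hij : i < j) :
      ‖perturbation v θ i - perturbation v θ j‖ = M * √2 := by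
    have := congrFun hzero (i, j)
    simp only [excess, hij, if_true, Pi.zero_apply] at this
    exact (sub_eq_zero.1 this).symm
  refine ⟨perturbation v θ, fun i j hij ↦ ?_⟩
  rcases hij.lt_or_gt with hlt | hgt
  · exact norm_eq_of_lt hlt
  · rw [norm_sub_rev, norm_eq_of_lt hgt]

end EquilateralPerturbation

section Equilateral

open MeasureTheory ProbabilityTheory

/-- Any two distinct points of `S` are at the same positive distance from each other. -/
def IsEquilateral {X : Type*} [NormedAddCommGroup X] (S : Set X) : Prop :=
  ∃ lam : ℝ, 0 < lam ∧ S.Pairwise fun x y ↦ ‖x - y‖ = lam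

lemma isEquilateral_singleton {X : Type*} [NormedAddCommGroup X] (x : X) :
    IsEquilateral {x} :=
  ⟨1, one_pos, Set.pairwise_singleton _ _⟩

lemma exists_finset_card_eq_isEquilateral {ι X : Type*} [Fintype ι] [NormedAddCommGroup X]
    {x : ι → X} {lam : ℝ} (hlam : 0 < lam) (hx : Pairwise fun i j ↦ ‖x i - x j‖ = lam) :
    ∃ S : Finset X, S.card = Fintype.card ι ∧ IsEquilateral (S : Set X) := by
  have x_inj : Function.Injective x := fun i j hij ↦ by
    by_contra hne
    have := hx hne
    simp only [hij, sub_self, norm_zero] at this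
    exact hlam.ne this
  refine ⟨Finset.univ.map ⟨x, x_inj⟩, Finset.card_map _, lam, hlam, ?_⟩
  simpa using hx.range_pairwise (r := fun x y : X ↦ ‖x - y‖ = lam)

lemma card_perturbationCoeffs_le (δ : ℝ) : (perturbationCoeffs δ).card ≤ 6 :=
  Finset.card_le_six

lemma six_pow_mul_two_mul_exp_neg_lt_one {k : ℕ} (hk : k ≠ 0) {t : ℝ} (ht : 3 * k ≤ t) :
    (6 : ℝ) ^ k * (2 * Real.exp (-t)) < 1 := by
  have lt_exp_three : 12 < Real.exp 3 := by
    calc (12 : ℝ) < 2.7 ^ 3 := by norm_num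
      _ ≤ Real.exp 1 ^ 3 := by gcongr; linarith [Real.exp_one_gt_d9]
      _ = Real.exp 3 := by rw [← Real.exp_nat_mul]; norm_num
  calc (6 : ℝ) ^ k * (2 * Real.exp (-t)) ≤ 6 ^ k * (2 ^ k * Real.exp (-(k * 3))) := by
        gcongr
        · exact le_self_pow₀ one_le_two hk
        · linarith
    _ = (12 / Real.exp 3) ^ k := by
        rw [Real.exp_neg, Real.exp_nat_mul, div_pow, ← mul_assoc, ← mul_pow, div_eq_mul_inv]
        norm_num
    _ < 1 := pow_lt_one₀ (by positivity) ((div_lt_one (Real.exp_pos 3)).2 lt_exp_three) hk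

lemma log_sub_log_three_le_log_half {n : ℕ} (hn : 2 ≤ n) :
    Real.log n - Real.log 3 ≤ Real.log (n / 2 : ℕ) := by
  have n_pos : (0 : ℝ) < n := by positivity
  have third_le_half : (n : ℝ) / 3 ≤ (n / 2 : ℕ) := by
    rw [div_le_iff₀ three_pos]
    exact_mod_cast (by lia : n ≤ n / 2 * 3)
  rw [← Real.log_div n_pos.ne' three_ne_zero]
  exact Real.log_le_log (by positivity) third_le_half

variable {X : Type*} [NormedAddCommGroup X] [NormedSpace ℝ X] [FiniteDimensional ℝ X]

lemma exists_log_finrank_le_integral_norm_sq (hX : 10 ≤ Real.log (finrank ℝ X)) :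
    ∃ (m : ℕ) (L : EuclideanSpace ℝ (Fin m) →L[ℝ] X), ‖L‖ ≤ 1 ∧
      Real.log (finrank ℝ X) / 512 ≤
        (∫ x, ‖L x‖ ∂(stdGaussian (EuclideanSpace ℝ (Fin m)))) ^ 2 := by
  set n := finrank ℝ X
  have two_le_n : 2 ≤ n := by
    by_contra! hlt
    interval_cases n <;> norm_num at hX
  have log_half : Real.log n / 2 ≤ Real.log (n / 2 : ℕ) := by
    linarith [log_sub_log_three_le_log_half two_le_n,
      Real.log_le_sub_one_of_pos (three_pos (α := ℝ))]
  obtain ⟨L, L_norm, L_single⟩ :=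
    exists_continuousLinearMap_le_norm_single (X := X) (Nat.mul_div_le n 2)
  refine ⟨n / 2, L, L_norm, ?_⟩
  have mean_lower := mul_sqrt_log_card_le_integral_norm L (by norm_num) L_single
    (by rw [Fintype.card_fin]; linarith)
  rw [Fintype.card_fin] at mean_lower
  calc Real.log n / 512 ≤ (1 / 4 / 4) ^ 2 * Real.log (n / 2 : ℕ) := by linarith
    _ = (1 / 4 / 4 * √(Real.log (n / 2 : ℕ))) ^ 2 := by
        rw [mul_pow, Real.sq_sqrt (by linarith)]
    _ ≤ _ := by gcongr

lemma exists_card_eq_isEquilateral {k : ℕ} (hk : k ≠ 0)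
    (hX : 2 * 10 ^ 12 * (k : ℝ) ^ 3 ≤ Real.log (finrank ℝ X)) :
    ∃ S : Finset X, S.card = k ∧ IsEquilateral (S : Set X) := by
  have k_ge : (1 : ℝ) ≤ k := mod_cast Nat.one_le_iff_ne_zero.2 hk
  have cube_ge : 1 ≤ (k : ℝ) ^ 3 := one_le_pow₀ k_ge
  obtain ⟨m, L, L_norm, log_le⟩ := exists_log_finrank_le_integral_norm_sq (X := X) (by linarith)
  set M := ∫ x, ‖L x‖ ∂(stdGaussian (EuclideanSpace ℝ (Fin m)))
  have M_nonneg : 0 ≤ M := integral_nonneg fun x ↦ norm_nonneg (L x)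
  have M_sq_pos : 0 < M ^ 2 := by linarith
  have M_pos : 0 < M := M_nonneg.lt_of_ne' (pow_ne_zero_iff two_ne_zero |>.1 M_sq_pos.ne')
  set δ : ℝ := 1 / (100 * k) with hδ
  have δ_pos : 0 < δ := by positivity
  have card_mul_δ : Fintype.card (Fin k) * δ = 1 / 100 := by
    rw [Fintype.card_fin, hδ]
    field_simp
  have exponent_ge : 3 * k ≤ (δ / 100 * M) ^ 2 / 8 := by
    have : (δ / 100 * M) ^ 2 / 8 = M ^ 2 / (8 * 10 ^ 8 * k ^ 2) := by
      rw [hδ]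
      field_simp
      norm_num
    rw [this, le_div_iff₀ (by positivity)]
    linarith
  obtain ⟨v, hv⟩ := exists_nearlyEuclideanOn (ι := Fin k) L L_norm (perturbationCoeffs δ)
    (η := δ / 100) (by positivity) <| by
      refine lt_of_le_of_lt ?_ (six_pow_mul_two_mul_exp_neg_lt_one hk exponent_ge)
      rw [Fintype.card_fin]
      gcongr
      exact_mod_cast card_perturbationCoeffs_le δ
  obtain ⟨x, hx⟩ := hv.exists_pairwise_norm_sub_eq M_pos.le δ_pos card_mul_δ.le
  simpa using exists_finset_card_eq_isEquilateral (by positivity) hx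

theorem brass_dekster_lower_bound_general :
    ∃ S : Finset X, 1 / 10 ^ 5 * Real.log (finrank ℝ X) ^ ((1 : ℝ) / 3) ≤ S.card ∧
      IsEquilateral (S : Set X) := by
  set y := 1 / 10 ^ 5 * Real.log (finrank ℝ X) ^ ((1 : ℝ) / 3) with hy
  rcases le_or_gt y 1 with y_le | y_gt
  · exact ⟨{0}, by simpa using y_le, by simpa using isEquilateral_singleton (0 : X)⟩
  have y_cube : y ^ 3 = Real.log (finrank ℝ X) / 10 ^ 15 := by
    rw [hy, mul_pow, ← Real.rpow_mul_natCast (Real.log_natCast_nonneg _)]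
    norm_num
    ring
  have ceil_le : (⌈y⌉₊ : ℝ) ≤ 2 * y := by linarith [Nat.ceil_lt_add_one (zero_le_one.trans y_gt.le)]
  have ceil_cube_le : (⌈y⌉₊ : ℝ) ^ 3 ≤ (2 * y) ^ 3 := by gcongr
  rw [mul_pow, y_cube] at ceil_cube_le
  obtain ⟨S, card_S, hS⟩ := exists_card_eq_isEquilateral (X := X) (k := ⌈y⌉₊)
    (Nat.ceil_pos.2 (by linarith)).ne' (by linarith [Real.log_natCast_nonneg (finrank ℝ X)])
  exact ⟨S, card_S ▸ Nat.le_ceil y, hS⟩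

end Equilateral

theorem brass_dekster_lower_bound :
    ∃ c : ℝ, 0 < c ∧ ∃ n₀ : ℕ, ∀ n : ℕ, n₀ ≤ n →
      ∀ (X : Type) [NormedAddCommGroup X] [NormedSpace ℝ X],
        finrank ℝ X = n →
        ∃ S : Finset X,
          c * (Real.log n) ^ ((1 : ℝ) / 3) ≤ (S.card : ℝ) ∧
          ∃ lam : ℝ, 0 < lam ∧ ∀ x ∈ S, ∀ y ∈ S, x ≠ y → ‖x - y‖ = lam := by
  refine ⟨1 / 10 ^ 5, by positivity, 1, fun n hn X _ _ hX ↦ ?_⟩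
  have : FiniteDimensional ℝ X := FiniteDimensional.of_finrank_pos (hX ▸ hn)
  obtain ⟨S, card_ge, lam, lam_pos, hS⟩ := brass_dekster_lower_bound_general (X := X)
  exact ⟨S, hX ▸ card_ge, lam, lam_pos, fun x hx y hy hxy ↦ hS hx hy hxy⟩
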